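/- Upper bound on Dirichlet boundary-crossing probabilities for all thresholds: Let m ≥ 1, b > 0, and let f : {0,…,m} → [0,b] satisfy f(0) = 0 and f(m) = b. Let α = (α_0,…,α_m) ∈ ℝ_{>0}^{m+1}, set ᾱ = Σ_{j=0}^m α_j and p̄(ℓ) = α_ℓ/ᾱ for ℓ = 0,…,m. Fix ε ∈ (0,1) and assume min(α_0, α_m) ≥ c₀·ε^{−2}. Define α⁻ = (α_0 + 1, α_1, …, α_{m−1}, α_m). Then for every μ ∈ (0, b), P_{w ∼ Dir(α⁻)}( wf ≥ μ ) ≤ (1 + ε) · P_{ζ ∼ N(0,1)}( ζ ≥ √ᾱ · A(p̄, μ, f) ). -/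

import Mathlib

open MeasureTheory ProbabilityTheory Real Set
open scoped ENNReal

noncomputable section

/-- The absolute constant `c₀ = (2/π)(8 + 49√6/9)²`. -/
def c0 : ℝ := (2 / Real.pi) * (8 + 49 * Real.sqrt 6 / 9) ^ 2

/-- Unnormalized density of `Dir(α)` in the first `m` coordinates. -/
def dirichletDensity (m : ℕ) (α : Fin (m + 1) → ℝ) : (Fin m → ℝ) → ℝ :=
  Set.indicator {x | (∀ i, 0 ≤ x i) ∧ ∑ i, x i ≤ 1}
    (fun x => (∏ i : Fin m, x i ^ (α i.castSucc - 1)) * (1 - ∑ i, x i) ^ (α (Fin.last m) - 1))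

def dirichletBase (m : ℕ) (α : Fin (m + 1) → ℝ) : Measure (Fin m → ℝ) :=
  volume.withDensity fun x => ENNReal.ofReal (dirichletDensity m α x)

/-- The Dirichlet distribution `Dir(α)`, as the law of the vector
`(x₀, …, x_{m-1}, 1 - ∑ x_i)` on the simplex `Δ_m ⊆ ℝ^{m+1}`. -/
def dirichlet (m : ℕ) (α : Fin (m + 1) → ℝ) : Measure (Fin (m + 1) → ℝ) :=
  Measure.map (fun x : Fin m → ℝ => Fin.snoc x (1 - ∑ i, x i))
    ((dirichletBase m α Set.univ)⁻¹ • dirichletBase m α)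

/-- Kullback–Leibler divergence between finitely supported `p, q` (for `p ≪ q`). -/
def klReal {m : ℕ} (p q : Fin (m + 1) → ℝ) : ℝ :=
  ∑ i, if p i = 0 then 0 else p i * Real.log (p i / q i)

/-- `Kinf(p, μ, f) = inf { KL(p,q) : q ∈ Δ_m, qf ≥ μ }`. -/
def Kinf {m : ℕ} (p : Fin (m + 1) → ℝ) (μ : ℝ) (f : Fin (m + 1) → ℝ) : ℝ :=
  sInf {x | ∃ q ∈ stdSimplex ℝ (Fin (m + 1)),
    (∀ i, q i = 0 → p i = 0) ∧ μ ≤ ∑ i, f i * q i ∧ x = klReal p q}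

/-- `Kinf*(p, μ, f) = inf { KL(p,q) : q ∈ Δ_m, qf = μ }`. -/
def Kinfstar {m : ℕ} (p : Fin (m + 1) → ℝ) (μ : ℝ) (f : Fin (m + 1) → ℝ) : ℝ :=
  sInf {x | ∃ q ∈ stdSimplex ℝ (Fin (m + 1)),
    (∀ i, q i = 0 → p i = 0) ∧ (∑ i, f i * q i) = μ ∧ x = klReal p q}

/-- `A(p, μ, f) = sgn(μ - pf) √(2 Kinf*(p, μ, f))`. -/
def Afun {m : ℕ} (p : Fin (m + 1) → ℝ) (μ : ℝ) (f : Fin (m + 1) → ℝ) : ℝ :=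
  Real.sign (μ - ∑ ℓ, f ℓ * p ℓ) * Real.sqrt (2 * Kinfstar p μ f)

/-!
Normalizing independent gamma variables expresses the density of `wf` under a Dirichlet distribution
at `u` through the density at `0` of a linear combination of those variables. Tilting them
exponentially so that `u` becomes the mean, inverting the Fourier transform, and taking the tilting
parameter `κ` as the coordinate, one gets the density
`saddleDensity * saddleRatio`, where the first factor is the saddle-point approximation and the
second is the Fourier integral of a product of standardized gamma characteristic functions. This
integral differs from its Gaussian value by a relative error of at most `ε` as soon as `α₀` and
`α_m`, attached to the two extreme values of `f`, are of order `ε⁻²`.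

It remains to compare `saddleDensity` with the Gaussian density pulled back along `√ᾱ * A`. Their
quotient is `√(2 * K) / (|κ| * √V)`, with `K` the divergence of the tilt and `V` its score variance;
it is at most `1` for `κ > 0` and at least `1` for `κ < 0`. Integrating over the event bounds it
directly when the threshold exceeds the mean. For lower thresholds the same comparison bounds the
complementary event from below, and the complement is transferred by the symmetry of the Gaussian,
under which the lower tail is the smaller one.
-/

section GammaCharFun

variable {ι : Type*} [Fintype ι] {α a : ι → ℝ}

lemma one_sub_mul_I_mem_slitPlane (x : ℝ) : 1 - (x : ℂ) * Complex.I ∈ Complex.slitPlane :=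
  Or.inl (by simp)

lemma one_sub_mul_I_ne_zero (x : ℝ) : 1 - (x : ℂ) * Complex.I ≠ 0 :=
  Complex.slitPlane_ne_zero (one_sub_mul_I_mem_slitPlane x)

lemma norm_one_sub_mul_I (x : ℝ) : ‖1 - (x : ℂ) * Complex.I‖ = (1 + x ^ 2) ^ (1 / 2 : ℝ) := by
  rw [Complex.norm_def, Complex.normSq_apply, Real.sqrt_eq_rpow]
  congr 1
  simp
  ring

lemma one_le_norm_one_sub_mul_I (x : ℝ) : 1 ≤ ‖1 - (x : ℂ) * Complex.I‖ := by
  rw [norm_one_sub_mul_I]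
  exact Real.one_le_rpow (by linarith [sq_nonneg x]) (by norm_num)

/-- The characteristic function `t ↦ ∏ j, (1 - i t a_j) ^ (-α_j)` of `∑ j, a_j G_j`, where the
`G_j ∼ Gamma(α_j, 1)` are independent. -/
def gammaSumCharFun (α a : ι → ℝ) (t : ℝ) : ℂ :=
  ∏ j, (1 - (t * a j : ℝ) * Complex.I) ^ (-(α j : ℂ))

lemma gammaSumCharFun_zero : gammaSumCharFun α a 0 = 1 := by
  simp [gammaSumCharFun]

lemma gammaSumCharFun_neg (t : ℝ) :
    gammaSumCharFun α a (-t) = gammaSumCharFun α (fun j => -a j) t := by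
  simp [gammaSumCharFun]

lemma norm_gammaSumCharFun (t : ℝ) :
    ‖gammaSumCharFun α a t‖ = ∏ j, (1 + (t * a j) ^ 2) ^ (-(α j / 2)) := by
  rw [gammaSumCharFun, norm_prod]
  refine Finset.prod_congr rfl fun j _ => ?_
  rw [← Complex.ofReal_neg, Complex.norm_cpow_real, norm_one_sub_mul_I,
    ← Real.rpow_mul (by positivity)]
  ring_nf

lemma hasDerivAt_gammaSumCharFun (t : ℝ) :
    HasDerivAt (gammaSumCharFun α a) (gammaSumCharFun α a t *
      ∑ j, (α j : ℂ) * (a j * Complex.I / (1 - (t * a j : ℝ) * Complex.I))) t := by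
  classical
  have factor (j : ι) : HasDerivAt (fun s : ℝ => (1 - (s * a j : ℝ) * Complex.I) ^ (-(α j : ℂ)))
      ((1 - (t * a j : ℝ) * Complex.I) ^ (-(α j : ℂ)) *
        (α j * (a j * Complex.I / (1 - (t * a j : ℝ) * Complex.I)))) t := by
    have linear : HasDerivAt (fun s : ℝ => 1 - ((s * a j : ℝ) : ℂ) * Complex.I)
        (-(a j * Complex.I)) t := by
      have := ((hasDerivAt_id t).mul_const (a j)).ofReal_comp
      simpa using (this.mul_const Complex.I).const_sub 1
    refine (((hasDerivAt_id _).cpow_const (c := -(α j : ℂ))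
      (one_sub_mul_I_mem_slitPlane (t * a j))).comp t linear).congr_deriv ?_
    rw [id, Complex.cpow_sub _ _ (one_sub_mul_I_ne_zero _), Complex.cpow_one]
    ring
  refine (HasDerivAt.fun_finsetProd fun j _ => factor j).congr_deriv ?_
  simp only [gammaSumCharFun, smul_eq_mul, Finset.mul_sum]
  refine Finset.sum_congr rfl fun j _ => ?_
  rw [← mul_assoc, Finset.prod_erase_mul _ _ (Finset.mem_univ j)]

lemma continuous_gammaSumCharFun : Continuous (gammaSumCharFun α a) :=
  continuous_iff_continuousAt.mpr fun t => (hasDerivAt_gammaSumCharFun t).continuousAt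

lemma norm_gammaSumCharFun_mul_exp (ha2 : ∑ j, α j * a j ^ 2 = 1) (t : ℝ) :
    ‖gammaSumCharFun α a t‖ * rexp (t ^ 2 / 2) =
      ∏ j, ((1 + (t * a j) ^ 2) * rexp (-(t * a j) ^ 2)) ^ (-(α j / 2)) := by
  have exponent : t ^ 2 / 2 = ∑ j, -(t * a j) ^ 2 * -(α j / 2) := by
    rw [← mul_one (t ^ 2 / 2), ← ha2, Finset.mul_sum]
    exact Finset.sum_congr rfl fun j _ => by ring
  rw [norm_gammaSumCharFun, exponent, Real.exp_sum, ← Finset.prod_mul_distrib]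
  refine Finset.prod_congr rfl fun j _ => ?_
  rw [Real.mul_rpow (by positivity) (Real.exp_pos _).le, Real.exp_mul]

lemma antitoneOn_one_add_mul_exp_neg : AntitoneOn (fun x : ℝ => (1 + x) * rexp (-x)) (Ici 0) := by
  intro x hx y _ hxy
  have hx : 0 ≤ x := hx
  calc (1 + y) * rexp (-y) ≤ ((1 + x) * (y - x + 1)) * rexp (-y) := by gcongr; nlinarith
    _ ≤ ((1 + x) * rexp (y - x)) * rexp (-y) := by gcongr; exact Real.add_one_le_exp _
    _ = (1 + x) * rexp (-x) := by rw [mul_assoc, ← Real.exp_add]; ring_nf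

lemma monotoneOn_norm_gammaSumCharFun_mul_exp (hα : ∀ j, 0 ≤ α j)
    (ha2 : ∑ j, α j * a j ^ 2 = 1) :
    MonotoneOn (fun t => ‖gammaSumCharFun α a t‖ * rexp (t ^ 2 / 2)) (Ici 0) := by
  intro s hs t _ hst
  have hs : 0 ≤ s := hs
  simp only [norm_gammaSumCharFun_mul_exp ha2]
  refine Finset.prod_le_prod (fun j _ => by positivity) fun j _ => ?_
  refine Real.rpow_le_rpow_of_nonpos (by positivity) ?_ (by linarith [hα j])
  refine antitoneOn_one_add_mul_exp_neg (sq_nonneg (s * a j)) (sq_nonneg (t * a j)) ?_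
  rw [mul_pow, mul_pow]
  gcongr

lemma norm_gammaSumCharFun_le {c : ℝ} (hc : 0 < c) (hα : ∀ j, 0 ≤ α j)
    (ha2 : ∑ j, α j * a j ^ 2 = 1) (ha : ∀ j, a j ^ 2 ≤ c) (t : ℝ) :
    ‖gammaSumCharFun α a t‖ ≤ (1 + c * t ^ 2) ^ (-(1 / (2 * c))) := by
  have hpos : 0 < 1 + c * t ^ 2 := by positivity
  calc ‖gammaSumCharFun α a t‖ = ∏ j, (1 + (t * a j) ^ 2) ^ (-(α j / 2)) :=
        norm_gammaSumCharFun t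
    _ ≤ ∏ j, ((1 + c * t ^ 2) ^ (a j ^ 2 / c)) ^ (-(α j / 2)) := by
        refine Finset.prod_le_prod (fun j _ => by positivity) fun j _ => ?_
        refine Real.rpow_le_rpow_of_nonpos (by positivity) ?_ (by linarith [hα j])
        refine (rpow_one_add_le_one_add_mul_self (by nlinarith [sq_nonneg t]) (by positivity)
          ((div_le_one hc).2 (ha j))).trans_eq ?_
        field_simp
    _ = (1 + c * t ^ 2) ^ (∑ j, -(1 / (2 * c)) * (α j * a j ^ 2)) := by
        rw [Real.rpow_sum_of_pos hpos]
        refine Finset.prod_congr rfl fun j _ => ?_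
        rw [← Real.rpow_mul hpos.le]
        congr 1
        field_simp
    _ = _ := by rw [← Finset.mul_sum, ha2, mul_one]

lemma norm_sum_mul_div_one_sub_mul_I_le {η : ℝ} (hα : ∀ j, 0 ≤ α j)
    (ha2 : ∑ j, α j * a j ^ 2 = 1) (ha : ∀ j, |a j| ≤ η) {s : ℝ} (hs : 0 ≤ s) :
    ‖∑ j, (α j : ℂ) * (-(s ^ 2 * a j ^ 3 : ℝ) * Complex.I / (1 - (s * a j : ℝ) * Complex.I))‖
      ≤ η * s ^ 2 := by
  calc _ ≤ ∑ j, α j * a j ^ 2 * (η * s ^ 2) := by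
        refine norm_sum_le_of_le _ fun j _ => ?_
        have : 0 ≤ η := (abs_nonneg _).trans (ha j)
        have hαj : 0 ≤ α j := hα j
        rw [norm_mul, norm_div, norm_mul, norm_neg, Complex.norm_I, Complex.norm_real,
          Complex.norm_real, mul_one, Real.norm_of_nonneg hαj, mul_assoc]
        gcongr
        refine (div_le_self (norm_nonneg _) (one_le_norm_one_sub_mul_I _)).trans ?_
        rw [Real.norm_eq_abs, abs_mul, abs_pow, abs_pow, abs_of_nonneg hs, ← sq_abs (a j)]
        calc s ^ 2 * |a j| ^ 3 = |a j| ^ 2 * (|a j| * s ^ 2) := by ring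
          _ ≤ |a j| ^ 2 * (η * s ^ 2) := by gcongr; exact ha j
    _ = η * s ^ 2 := by rw [← Finset.sum_mul, ha2, one_mul]

lemma hasDerivAt_gammaSumCharFun_mul_exp (ha1 : ∑ j, α j * a j = 0)
    (ha2 : ∑ j, α j * a j ^ 2 = 1) (s : ℝ) :
    HasDerivAt (fun s => gammaSumCharFun α a s * rexp (s ^ 2 / 2))
      (gammaSumCharFun α a s * rexp (s ^ 2 / 2) *
        ∑ j, (α j : ℂ) * (-(s ^ 2 * a j ^ 3 : ℝ) * Complex.I /
          (1 - (s * a j : ℝ) * Complex.I))) s := by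
  have exp_deriv : HasDerivAt (fun s : ℝ => ((rexp (s ^ 2 / 2) : ℝ) : ℂ))
      ((rexp (s ^ 2 / 2) * s : ℝ) : ℂ) s := by
    have : HasDerivAt (fun s : ℝ => s ^ 2 / 2) s s :=
      (((hasDerivAt_id' s).fun_pow 2).div_const 2).congr_deriv (by simp)
    exact this.exp.ofReal_comp
  have moments : (s : ℂ) = ∑ j, (α j : ℂ) * (a j ^ 2 * s - a j * Complex.I) := by
    calc (s : ℂ) = (∑ j, α j * a j ^ 2 : ℝ) * s - (∑ j, α j * a j : ℝ) * Complex.I := by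
          simp [ha1, ha2]
      _ = _ := by
          push_cast
          rw [Finset.sum_mul, Finset.sum_mul, ← Finset.sum_sub_distrib]
          exact Finset.sum_congr rfl fun j _ => by ring
  have cumulants : ∑ j, (α j : ℂ) * (-(s ^ 2 * a j ^ 3 : ℝ) * Complex.I /
        (1 - (s * a j : ℝ) * Complex.I)) =
      ∑ j, (α j : ℂ) * (a j * Complex.I / (1 - (s * a j : ℝ) * Complex.I)) + s := by
    conv_rhs => rw [moments]
    rw [← Finset.sum_add_distrib]
    refine Finset.sum_congr rfl fun j _ => ?_
    have := one_sub_mul_I_ne_zero (s * a j)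
    rw [← mul_add]
    congr 1
    rw [div_add' _ _ _ this, div_left_inj' this]
    push_cast
    linear_combination -(s * a j ^ 2 : ℂ) * Complex.I_sq
  refine ((hasDerivAt_gammaSumCharFun s).mul exp_deriv).congr_deriv ?_
  rw [cumulants]
  push_cast
  ring

lemma norm_gammaSumCharFun_mul_exp_sub_one_le {η : ℝ} (hα : ∀ j, 0 ≤ α j)
    (ha1 : ∑ j, α j * a j = 0) (ha2 : ∑ j, α j * a j ^ 2 = 1) (ha : ∀ j, |a j| ≤ η)
    {t : ℝ} (ht : 0 ≤ t) :
    ‖gammaSumCharFun α a t * rexp (t ^ 2 / 2) - 1‖ ≤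
      η * t ^ 3 / 3 * (‖gammaSumCharFun α a t‖ * rexp (t ^ 2 / 2)) := by
  set F : ℝ → ℂ := fun s => gammaSumCharFun α a s * rexp (s ^ 2 / 2) with hF
  set L := ‖gammaSumCharFun α a t‖ * rexp (t ^ 2 / 2)
  have F_deriv := hasDerivAt_gammaSumCharFun_mul_exp ha1 ha2
  have boundary (s : ℝ) : HasDerivAt (fun s => η * s ^ 3 / 3 * L) (η * s ^ 2 * L) s :=
    ((((hasDerivAt_id' s).fun_pow 3).const_mul η).div_const 3 |>.mul_const L).congr_deriv
      (by push_cast; ring)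
  refine image_norm_le_of_norm_deriv_right_le_deriv_boundary (f := fun s => F s - 1)
    (fun s _ => ((F_deriv s).sub_const 1).continuousAt.continuousWithinAt)
    (fun s _ => ((F_deriv s).sub_const 1).hasDerivWithinAt)
    (by simp [hF, gammaSumCharFun_zero]) boundary (fun s hs => ?_) (right_mem_Icc.2 ht)
  have norm_F_le : ‖gammaSumCharFun α a s * rexp (s ^ 2 / 2)‖ ≤ L := by
    rw [norm_mul, Complex.norm_real, Real.norm_of_nonneg (Real.exp_pos _).le]
    exact monotoneOn_norm_gammaSumCharFun_mul_exp hα ha2 hs.1 ht hs.2.le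
  have sum_le := norm_sum_mul_div_one_sub_mul_I_le hα ha2 ha hs.1
  rw [norm_mul, mul_comm]
  exact mul_le_mul sum_le norm_F_le (norm_nonneg _) ((norm_nonneg _).trans sum_le)

lemma norm_gammaSumCharFun_sub_gaussian_le {η : ℝ} (hα : ∀ j, 0 ≤ α j)
    (ha1 : ∑ j, α j * a j = 0) (ha2 : ∑ j, α j * a j ^ 2 = 1) (ha : ∀ j, |a j| ≤ η) (t : ℝ) :
    ‖gammaSumCharFun α a t - rexp (-t ^ 2 / 2)‖ ≤ η * |t| ^ 3 / 3 * ‖gammaSumCharFun α a t‖ := by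
  wlog ht : 0 ≤ t generalizing t a
  · have := this (a := fun j => -a j) (by simpa using ha1) (by simpa using ha2) (by simpa using ha)
      (-t) (by linarith)
    rw [← gammaSumCharFun_neg] at this
    simpa using this
  have hE : rexp (t ^ 2 / 2) * rexp (-t ^ 2 / 2) = 1 := by
    rw [← Real.exp_add]
    ring_nf
    simp
  calc ‖gammaSumCharFun α a t - rexp (-t ^ 2 / 2)‖
      = ‖gammaSumCharFun α a t * rexp (t ^ 2 / 2) - 1‖ * rexp (-t ^ 2 / 2) := by
        rw [← Real.norm_of_nonneg (Real.exp_pos (-t ^ 2 / 2)).le, ← Complex.norm_real, ← norm_mul,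
          sub_mul, mul_assoc, ← Complex.ofReal_mul, hE, Complex.norm_real,
          Real.norm_of_nonneg (Real.exp_pos _).le, Complex.ofReal_one, mul_one, one_mul]
    _ ≤ η * t ^ 3 / 3 * (‖gammaSumCharFun α a t‖ * rexp (t ^ 2 / 2)) * rexp (-t ^ 2 / 2) := by
        gcongr
        exact norm_gammaSumCharFun_mul_exp_sub_one_le hα ha1 ha2 ha ht
    _ = η * |t| ^ 3 / 3 * ‖gammaSumCharFun α a t‖ := by
        rw [mul_assoc, mul_assoc ‖_‖, hE, mul_one, abs_of_nonneg ht]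

/-- The integral left at a saddle point when the density of a ratio of Gamma sums is computed by
Fourier inversion; it is close to `∫ exp (-t² / 2) dt = √(2π)` when all `a j` and `c` are small. -/
def saddleIntegral (α a : ι → ℝ) (c : ℝ) : ℂ :=
  ∫ t : ℝ, (1 - (t * c : ℝ) * Complex.I)⁻¹ * gammaSumCharFun α a t

lemma norm_saddleIntegrand_sub_gaussian_le {η c : ℝ} (hα : ∀ j, 0 ≤ α j)
    (ha1 : ∑ j, α j * a j = 0) (ha2 : ∑ j, α j * a j ^ 2 = 1) (ha : ∀ j, |a j| ≤ η)
    (hc : |c| ≤ η) (t : ℝ) :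
    ‖(1 - (t * c : ℝ) * Complex.I)⁻¹ * gammaSumCharFun α a t - rexp (-t ^ 2 / 2)‖ ≤
      η * (|t| + |t| ^ 3 / 3) * ‖gammaSumCharFun α a t‖ := by
  set ψ := gammaSumCharFun α a t
  set d : ℂ := 1 - (t * c : ℝ) * Complex.I with hd
  have d_ne : d ≠ 0 := one_sub_mul_I_ne_zero _
  have pole : ‖d⁻¹ * ψ - ψ‖ ≤ η * |t| * ‖ψ‖ := by
    have : d⁻¹ * ψ - ψ = (t * c : ℝ) * Complex.I * d⁻¹ * ψ := by
      field_simp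
      rw [hd]
      ring
    rw [this, norm_mul, norm_mul, norm_mul, norm_inv, Complex.norm_I, mul_one, Complex.norm_real,
      Real.norm_eq_abs, abs_mul]
    calc |t| * |c| * ‖d‖⁻¹ * ‖ψ‖ ≤ |t| * η * 1 * ‖ψ‖ := by
          have : 0 ≤ η := (abs_nonneg c).trans hc
          gcongr
          exact inv_le_one_of_one_le₀ (one_le_norm_one_sub_mul_I _)
      _ = η * |t| * ‖ψ‖ := by ring
  calc ‖d⁻¹ * ψ - rexp (-t ^ 2 / 2)‖ ≤ ‖d⁻¹ * ψ - ψ‖ + ‖ψ - rexp (-t ^ 2 / 2)‖ :=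
        norm_sub_le_norm_sub_add_norm_sub ..
    _ ≤ η * |t| * ‖ψ‖ + η * |t| ^ 3 / 3 * ‖ψ‖ :=
        add_le_add pole (norm_gammaSumCharFun_sub_gaussian_le hα ha1 ha2 ha t)
    _ = η * (|t| + |t| ^ 3 / 3) * ‖ψ‖ := by ring

lemma add_cube_div_le_twelve_mul_inv (t : ℝ) :
    (t + t ^ 3 / 3) * ((1 + t ^ 2 / 6) ^ 3)⁻¹ ≤ 12 * (1 + t ^ 2)⁻¹ := by
  rw [← div_eq_mul_inv, ← div_eq_mul_inv, div_le_div_iff₀ (by positivity) (by positivity)]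
  nlinarith [sq_nonneg (t ^ 2 * (t - 3)), sq_nonneg (t * (t - 4 / 3)), sq_nonneg (t - 1),
    sq_nonneg (t * (t - 3)), sq_nonneg (t ^ 3), sq_nonneg (t ^ 2)]

lemma norm_saddleIntegrand_sub_gaussian_le_inv {η c : ℝ} (hα : ∀ j, 0 ≤ α j)
    (ha1 : ∑ j, α j * a j = 0) (ha2 : ∑ j, α j * a j ^ 2 = 1) (hη : η ^ 2 ≤ 1 / 6)
    (ha : ∀ j, |a j| ≤ η) (hc : |c| ≤ η) (t : ℝ) :
    ‖(1 - (t * c : ℝ) * Complex.I)⁻¹ * gammaSumCharFun α a t - rexp (-t ^ 2 / 2)‖ ≤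
      12 * η * (1 + t ^ 2)⁻¹ := by
  have hη0 : 0 ≤ η := (abs_nonneg c).trans hc
  have decay : ‖gammaSumCharFun α a t‖ ≤ ((1 + t ^ 2 / 6) ^ 3)⁻¹ := by
    refine (norm_gammaSumCharFun_le (c := 1 / 6) (by norm_num) hα ha2 (fun j => ?_) t).trans_eq ?_
    · exact (sq_le_sq' (by linarith [abs_le.1 (ha j)]) (abs_le.1 (ha j)).2).trans hη
    · rw [show -(1 / (2 * (1 / 6 : ℝ))) = -(3 : ℕ) by norm_num,
        Real.rpow_neg (by positivity), Real.rpow_natCast, one_div_mul_eq_div]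
  calc _ ≤ η * (|t| + |t| ^ 3 / 3) * ((1 + |t| ^ 2 / 6) ^ 3)⁻¹ := by
        rw [sq_abs]
        refine (norm_saddleIntegrand_sub_gaussian_le hα ha1 ha2 ha hc t).trans ?_
        gcongr
    _ ≤ η * (12 * (1 + |t| ^ 2)⁻¹) := by
        rw [mul_assoc]
        exact mul_le_mul_of_nonneg_left (add_cube_div_le_twelve_mul_inv |t|) hη0
    _ = 12 * η * (1 + t ^ 2)⁻¹ := by
        rw [sq_abs]
        ring

lemma norm_saddleIntegral_sub_sqrt_two_pi_le {η c : ℝ} (hα : ∀ j, 0 ≤ α j)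
    (ha1 : ∑ j, α j * a j = 0) (ha2 : ∑ j, α j * a j ^ 2 = 1) (hη : η ^ 2 ≤ 1 / 6)
    (ha : ∀ j, |a j| ≤ η) (hc : |c| ≤ η) :
    ‖saddleIntegral α a c - √(2 * π)‖ ≤ 12 * π * η := by
  have gauss_eq (t : ℝ) : rexp (-t ^ 2 / 2) = rexp (-(1 / 2) * t ^ 2) := by ring_nf
  have gauss_integrable : Integrable fun t : ℝ => ((rexp (-t ^ 2 / 2) : ℝ) : ℂ) := by
    simp only [gauss_eq]
    exact (integrable_exp_neg_mul_sq (by norm_num)).ofReal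
  have gauss_integral : ∫ t : ℝ, ((rexp (-t ^ 2 / 2) : ℝ) : ℂ) = √(2 * π) := by
    rw [integral_complex_ofReal]
    simp only [gauss_eq, integral_gaussian]
    ring_nf
  have bound_integrable : Integrable fun t : ℝ => 12 * η * (1 + t ^ 2)⁻¹ :=
    integrable_inv_one_add_sq.const_mul _
  have pointwise := norm_saddleIntegrand_sub_gaussian_le_inv hα ha1 ha2 hη ha hc
  have diff_integrable : Integrable fun t : ℝ =>
      (1 - (t * c : ℝ) * Complex.I)⁻¹ * gammaSumCharFun α a t - rexp (-t ^ 2 / 2) := by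
    refine bound_integrable.mono' (Continuous.aestronglyMeasurable ?_) (.of_forall pointwise)
    exact ((Continuous.inv₀ (by fun_prop) fun t => one_sub_mul_I_ne_zero _).mul
      continuous_gammaSumCharFun).sub (by fun_prop)
  have integrand_integrable : Integrable fun t : ℝ =>
      (1 - (t * c : ℝ) * Complex.I)⁻¹ * gammaSumCharFun α a t := by
    refine (diff_integrable.add gauss_integrable).congr (.of_forall fun t => ?_)
    exact sub_add_cancel _ _
  rw [saddleIntegral, ← gauss_integral, ← integral_sub integrand_integrable gauss_integrable]
  calc _ ≤ ∫ t : ℝ, 12 * η * (1 + t ^ 2)⁻¹ :=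
        norm_integral_le_of_norm_le bound_integrable (.of_forall pointwise)
    _ = 12 * π * η := by
        rw [integral_const_mul, integral_univ_inv_one_add_sq]
        ring

end GammaCharFun

section Tilt

variable {ι : Type*} {p f : ι → ℝ} {κ b : ℝ}

/-- The score `z_j = f_j / (1 - κ f_j)`, minus the derivative of `κ ↦ log (1 - κ f_j)`. -/
def tiltScore (f : ι → ℝ) (κ : ℝ) (j : ι) : ℝ := f j / (1 - κ * f j)

lemma inv_one_sub_mul_eq {j : ι} (hκ : 1 - κ * f j ≠ 0) :
    (1 - κ * f j)⁻¹ = 1 + κ * tiltScore f κ j := by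
  rw [tiltScore]
  field_simp
  ring

lemma hasDerivAt_one_sub_mul (x : ℝ) : HasDerivAt (fun κ : ℝ => 1 - κ * x) (-x) κ := by
  simpa using ((hasDerivAt_id κ).mul_const x).const_sub 1

lemma hasDerivAt_tiltScore {j : ι} (hκ : 1 - κ * f j ≠ 0) :
    HasDerivAt (fun κ => tiltScore f κ j) (tiltScore f κ j ^ 2) κ := by
  refine ((hasDerivAt_const κ (f j)).div (hasDerivAt_one_sub_mul (f j)) hκ).congr_deriv ?_
  rw [tiltScore]
  field_simp
  ring

variable [Fintype ι]

/-- The mean `N` of the score under `p`. -/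
def scoreMean (p f : ι → ℝ) (κ : ℝ) : ℝ := ∑ j, p j * tiltScore f κ j

/-- The variance `V` of the score under `p`. -/
def scoreVar (p f : ι → ℝ) (κ : ℝ) : ℝ := ∑ j, p j * (tiltScore f κ j - scoreMean p f κ) ^ 2

/-- The normalising constant `M` of the weights `p_j / (1 - κ f_j)`. -/
def tiltMass (p f : ι → ℝ) (κ : ℝ) : ℝ := ∑ j, p j / (1 - κ * f j)

/-- The mean of `f` under the tilted distribution `q_j = p_j / (M (1 - κ f_j))`. -/
def tiltMean (p f : ι → ℝ) (κ : ℝ) : ℝ := scoreMean p f κ / tiltMass p f κ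

/-- The divergence `KL(p, q)` from `p` to the tilted distribution `q_j = p_j / (M (1 - κ f_j))`. -/
def tiltKL (p f : ι → ℝ) (κ : ℝ) : ℝ := ∑ j, p j * log (1 - κ * f j) + log (tiltMass p f κ)

/-- A positive probability vector `p` with a reward `f` whose smallest value is `0` and whose
largest value is `b > 0`. -/
structure IsReward (p f : ι → ℝ) (b : ℝ) : Prop where
  pos : ∀ j, 0 < p j
  sum_eq_one : ∑ j, p j = 1
  bound_pos : 0 < b
  mem_Icc : ∀ j, f j ∈ Icc 0 b
  exists_eq_zero : ∃ j, f j = 0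
  exists_eq_bound : ∃ j, f j = b

lemma tiltMass_eq (hp : ∑ j, p j = 1) (hκ : ∀ j, 1 - κ * f j ≠ 0) :
    tiltMass p f κ = 1 + κ * scoreMean p f κ := by
  simp only [tiltMass, scoreMean, div_eq_mul_inv, inv_one_sub_mul_eq (hκ _), mul_add, mul_one,
    Finset.sum_add_distrib, hp, Finset.mul_sum]
  congr! 2
  ring

lemma scoreVar_eq (hp : ∑ j, p j = 1) :
    scoreVar p f κ = ∑ j, p j * tiltScore f κ j ^ 2 - scoreMean p f κ ^ 2 := by
  have expand (j : ι) : p j * (tiltScore f κ j - scoreMean p f κ) ^ 2 =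
      p j * tiltScore f κ j ^ 2 - 2 * scoreMean p f κ * (p j * tiltScore f κ j) +
        scoreMean p f κ ^ 2 * p j := by ring
  simp only [scoreVar, expand, Finset.sum_add_distrib, Finset.sum_sub_distrib, ← Finset.mul_sum, hp]
  rw [← scoreMean]
  ring

lemma hasDerivAt_scoreMean (hκ : ∀ j, 1 - κ * f j ≠ 0) :
    HasDerivAt (scoreMean p f) (∑ j, p j * tiltScore f κ j ^ 2) κ :=
  HasDerivAt.fun_sum fun j _ => (hasDerivAt_tiltScore (hκ j)).const_mul (p j)

lemma hasDerivAt_tiltMass (hκ : ∀ j, 1 - κ * f j ≠ 0) :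
    HasDerivAt (tiltMass p f)
      (scoreMean p f κ + κ * ∑ j, p j * tiltScore f κ j ^ 2) κ := by
  refine (HasDerivAt.fun_sum fun j _ => (hasDerivAt_const κ (p j)).div
    (hasDerivAt_one_sub_mul (f j)) (hκ j)).congr_deriv ?_
  rw [scoreMean, Finset.mul_sum, ← Finset.sum_add_distrib]
  refine Finset.sum_congr rfl fun j _ => ?_
  have := hκ j
  rw [tiltScore]
  field_simp
  ring

lemma hasDerivAt_scoreVar (hp : ∑ j, p j = 1) (hκ : ∀ j, 1 - κ * f j ≠ 0) :
    HasDerivAt (scoreVar p f) (2 * ∑ j, p j * (tiltScore f κ j - scoreMean p f κ) ^ 2 *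
      (tiltScore f κ j + scoreMean p f κ)) κ := by
  have formula : scoreVar p f =
      fun κ => ∑ j, p j * tiltScore f κ j ^ 2 - scoreMean p f κ ^ 2 := by
    ext κ
    exact scoreVar_eq hp
  rw [formula]
  refine ((HasDerivAt.fun_sum fun j _ => ((hasDerivAt_tiltScore (hκ j)).pow 2).const_mul
    (p j)).sub ((hasDerivAt_scoreMean hκ).pow 2)).congr_deriv ?_
  set N := scoreMean p f κ with hN
  have expand (j : ι) : p j * (tiltScore f κ j - N) ^ 2 * (tiltScore f κ j + N) =
      p j * tiltScore f κ j ^ 3 - N * (p j * tiltScore f κ j ^ 2)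
        - N ^ 2 * (p j * tiltScore f κ j) + N ^ 3 * p j := by ring
  simp only [expand, Finset.sum_add_distrib, Finset.sum_sub_distrib, ← Finset.mul_sum, hp]
  rw [← scoreMean, ← hN]
  have cube (j : ι) : p j * (((2 : ℕ) : ℝ) * tiltScore f κ j ^ (2 - 1) * tiltScore f κ j ^ 2) =
      2 * (p j * tiltScore f κ j ^ 3) := by
    push_cast
    ring
  simp only [cube, ← Finset.mul_sum]
  push_cast
  ring

lemma hasDerivAt_tiltMean (hp : ∑ j, p j = 1) (hκ : ∀ j, 1 - κ * f j ≠ 0)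
    (hM : tiltMass p f κ ≠ 0) :
    HasDerivAt (tiltMean p f) (scoreVar p f κ / tiltMass p f κ ^ 2) κ := by
  refine ((hasDerivAt_scoreMean hκ).div (hasDerivAt_tiltMass hκ) hM).congr_deriv ?_
  rw [scoreVar_eq hp, tiltMass_eq hp hκ]
  ring

lemma hasDerivAt_tiltKL (hp : ∑ j, p j = 1) (hκ : ∀ j, 1 - κ * f j ≠ 0)
    (hM : tiltMass p f κ ≠ 0) :
    HasDerivAt (tiltKL p f) (κ * scoreVar p f κ / tiltMass p f κ) κ := by
  refine ((HasDerivAt.fun_sum fun j _ => ((hasDerivAt_one_sub_mul (f j)).log (hκ j)).const_mul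
    (p j)).add ((hasDerivAt_tiltMass hκ).log hM)).congr_deriv ?_
  have score (j : ι) : p j * (-f j / (1 - κ * f j)) = -(p j * tiltScore f κ j) := by
    rw [tiltScore]
    ring
  simp only [score, Finset.sum_neg_distrib]
  rw [← scoreMean, ← sub_eq_neg_add, div_sub' hM, scoreVar_eq hp, tiltMass_eq hp hκ]
  ring

@[simp]
lemma tiltKL_zero (hp : ∑ j, p j = 1) : tiltKL p f 0 = 0 := by
  simp [tiltKL, tiltMass, hp]

lemma tiltMean_zero (hp : ∑ j, p j = 1) : tiltMean p f 0 = ∑ j, f j * p j := by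
  simp [tiltMean, tiltMass, scoreMean, tiltScore, hp, mul_comm]

namespace IsReward

lemma inv_pos (h : IsReward p f b) : 0 < b⁻¹ := _root_.inv_pos.2 h.bound_pos

lemma one_sub_mul_pos (h : IsReward p f b) (hκ : κ < b⁻¹) (j : ι) : 0 < 1 - κ * f j := by
  obtain ⟨hf0, hfb⟩ := h.mem_Icc j
  have : κ * b < 1 := by rwa [← lt_div_iff₀ h.bound_pos, one_div]
  rcases le_total κ 0 with h0 | h0 <;> nlinarith

lemma one_sub_mul_ne_zero (h : IsReward p f b) (hκ : κ < b⁻¹) (j : ι) : 1 - κ * f j ≠ 0 :=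
  (h.one_sub_mul_pos hκ j).ne'

lemma div_le_tiltMass (h : IsReward p f b) (hκ : κ < b⁻¹) (j : ι) :
    p j / (1 - κ * f j) ≤ tiltMass p f κ :=
  Finset.single_le_sum (f := fun j => p j / (1 - κ * f j))
    (fun j _ => (div_pos (h.pos j) (h.one_sub_mul_pos hκ j)).le) (Finset.mem_univ j)

lemma tiltMass_pos (h : IsReward p f b) (hκ : κ < b⁻¹) : 0 < tiltMass p f κ := by
  obtain ⟨i, -⟩ := h.exists_eq_zero
  exact (div_pos (h.pos i) (h.one_sub_mul_pos hκ i)).trans_le (h.div_le_tiltMass hκ i)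

lemma tiltScore_nonneg (h : IsReward p f b) (hκ : κ < b⁻¹) (j : ι) : 0 ≤ tiltScore f κ j :=
  div_nonneg (h.mem_Icc j).1 (h.one_sub_mul_pos hκ j).le

lemma tiltScore_le (h : IsReward p f b) (hκ : κ < b⁻¹) (j : ι) :
    tiltScore f κ j ≤ b / (1 - κ * b) := by
  obtain ⟨i, hi⟩ := h.exists_eq_bound
  have := h.one_sub_mul_pos hκ i
  rw [hi] at this
  rw [tiltScore, div_le_div_iff₀ (h.one_sub_mul_pos hκ j) this]
  linarith [(h.mem_Icc j).2]

lemma scoreMean_pos (h : IsReward p f b) (hκ : κ < b⁻¹) : 0 < scoreMean p f κ := by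
  obtain ⟨i, hi⟩ := h.exists_eq_bound
  refine Finset.sum_pos' (fun j _ => mul_nonneg (h.pos j).le (h.tiltScore_nonneg hκ j))
    ⟨i, Finset.mem_univ i, mul_pos (h.pos i) (div_pos ?_ (h.one_sub_mul_pos hκ i))⟩
  rw [hi]
  exact h.bound_pos

lemma scoreMean_le (h : IsReward p f b) {B : ℝ} (hB : ∀ j, tiltScore f κ j ≤ B) :
    scoreMean p f κ ≤ B := by
  calc scoreMean p f κ ≤ ∑ j, p j * B :=
        Finset.sum_le_sum fun j _ => mul_le_mul_of_nonneg_left (hB j) (h.pos j).le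
    _ = B := by rw [← Finset.sum_mul, h.sum_eq_one, one_mul]

lemma scoreVar_pos (h : IsReward p f b) (hκ : κ < b⁻¹) : 0 < scoreVar p f κ := by
  obtain ⟨i, hi⟩ := h.exists_eq_zero
  refine Finset.sum_pos' (fun j _ => mul_nonneg (h.pos j).le (sq_nonneg _))
    ⟨i, Finset.mem_univ i, mul_pos (h.pos i) ?_⟩
  have : tiltScore f κ i = 0 := by simp [tiltScore, hi]
  rw [this, zero_sub, neg_sq]
  exact pow_pos (h.scoreMean_pos hκ) 2

lemma tiltMean_pos (h : IsReward p f b) (hκ : κ < b⁻¹) : 0 < tiltMean p f κ :=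
  div_pos (h.scoreMean_pos hκ) (h.tiltMass_pos hκ)

lemma hasDerivAt_tiltMean (h : IsReward p f b) (hκ : κ < b⁻¹) :
    HasDerivAt (tiltMean p f) (scoreVar p f κ / tiltMass p f κ ^ 2) κ :=
  _root_.hasDerivAt_tiltMean h.sum_eq_one (h.one_sub_mul_ne_zero hκ) (h.tiltMass_pos hκ).ne'

lemma hasDerivAt_tiltKL (h : IsReward p f b) (hκ : κ < b⁻¹) :
    HasDerivAt (tiltKL p f) (κ * scoreVar p f κ / tiltMass p f κ) κ :=
  _root_.hasDerivAt_tiltKL h.sum_eq_one (h.one_sub_mul_ne_zero hκ) (h.tiltMass_pos hκ).ne'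

lemma strictMonoOn_tiltMean (h : IsReward p f b) : StrictMonoOn (tiltMean p f) (Iio b⁻¹) := by
  refine strictMonoOn_of_hasDerivWithinAt_pos (convex_Iio _)
    (fun κ hκ => (h.hasDerivAt_tiltMean hκ).continuousAt.continuousWithinAt)
    (fun κ hκ => (h.hasDerivAt_tiltMean (interior_Iio.subset hκ)).hasDerivWithinAt)
    fun κ hκ => ?_
  rw [interior_Iio] at hκ
  exact div_pos (h.scoreVar_pos hκ) (pow_pos (h.tiltMass_pos hκ) 2)

lemma strictMonoOn_tiltKL (h : IsReward p f b) : StrictMonoOn (tiltKL p f) (Ico 0 b⁻¹) := by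
  refine strictMonoOn_of_hasDerivWithinAt_pos (convex_Ico _ _)
    (fun κ hκ => (h.hasDerivAt_tiltKL hκ.2).continuousAt.continuousWithinAt)
    (fun κ hκ => (h.hasDerivAt_tiltKL (interior_subset hκ).2).hasDerivWithinAt)
    fun κ hκ => ?_
  rw [interior_Ico] at hκ
  exact div_pos (mul_pos hκ.1 (h.scoreVar_pos hκ.2)) (h.tiltMass_pos hκ.2)

lemma strictAntiOn_tiltKL (h : IsReward p f b) : StrictAntiOn (tiltKL p f) (Iic 0) := by
  have lt_inv {κ : ℝ} (hκ : κ ∈ Iic 0) : κ < b⁻¹ := lt_of_le_of_lt hκ h.inv_pos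
  refine strictAntiOn_of_hasDerivWithinAt_neg (convex_Iic _)
    (fun κ hκ => (h.hasDerivAt_tiltKL (lt_inv hκ)).continuousAt.continuousWithinAt)
    (fun κ hκ => (h.hasDerivAt_tiltKL (lt_inv (interior_subset hκ))).hasDerivWithinAt)
    fun κ hκ => ?_
  have hκ' := lt_inv (interior_subset hκ)
  rw [interior_Iic] at hκ
  exact div_neg_of_neg_of_pos (mul_neg_of_neg_of_pos hκ (h.scoreVar_pos hκ')) (h.tiltMass_pos hκ')

lemma tiltKL_pos (h : IsReward p f b) (hκ : κ < b⁻¹) (hκ0 : κ ≠ 0) : 0 < tiltKL p f κ := by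
  rw [← tiltKL_zero (f := f) h.sum_eq_one]
  rcases hκ0.lt_or_gt with h0 | h0
  · exact h.strictAntiOn_tiltKL h0.le self_mem_Iic h0
  · exact h.strictMonoOn_tiltKL ⟨le_rfl, h.inv_pos⟩ ⟨h0.le, hκ⟩ h0

lemma antitoneOn_tiltKL_sub (h : IsReward p f b) :
    AntitoneOn (fun κ => tiltKL p f κ - κ ^ 2 / 2 * scoreVar p f κ) (Iio b⁻¹) := by
  have deriv {κ : ℝ} (hκ : κ < b⁻¹) := (h.hasDerivAt_tiltKL hκ).sub
    (((hasDerivAt_pow 2 κ).div_const 2).mul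
      (hasDerivAt_scoreVar h.sum_eq_one (h.one_sub_mul_ne_zero hκ)))
  refine antitoneOn_of_hasDerivWithinAt_nonpos (convex_Iio _)
    (fun κ hκ => (deriv hκ).continuousAt.continuousWithinAt)
    (fun κ hκ => (deriv (interior_Iio.subset hκ)).hasDerivWithinAt) fun κ hκ => ?_
  rw [interior_Iio] at hκ
  have hM := h.tiltMass_pos hκ
  have hV := h.scoreVar_pos hκ
  have hN := h.scoreMean_pos hκ
  have third : 0 ≤ ∑ j, p j * (tiltScore f κ j - scoreMean p f κ) ^ 2 *
      (tiltScore f κ j + scoreMean p f κ) := Finset.sum_nonneg fun j _ =>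
    mul_nonneg (mul_nonneg (h.pos j).le (sq_nonneg _)) (add_nonneg (h.tiltScore_nonneg hκ j) hN.le)
  have first : κ * scoreVar p f κ / tiltMass p f κ - κ * scoreVar p f κ =
      -(κ ^ 2 * scoreMean p f κ * scoreVar p f κ / tiltMass p f κ) := by
    field_simp
    rw [tiltMass_eq h.sum_eq_one (h.one_sub_mul_ne_zero hκ)]
    ring
  have : 0 ≤ κ ^ 2 * scoreMean p f κ * scoreVar p f κ / tiltMass p f κ := by positivity
  have := mul_nonneg (sq_nonneg κ) third
  push_cast
  linarith

lemma two_mul_tiltKL_le (h : IsReward p f b) (h0 : 0 ≤ κ) (hκ : κ < b⁻¹) :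
    2 * tiltKL p f κ ≤ κ ^ 2 * scoreVar p f κ := by
  have := h.antitoneOn_tiltKL_sub h.inv_pos hκ h0
  simp only [tiltKL_zero h.sum_eq_one] at this
  linarith

lemma le_two_mul_tiltKL (h : IsReward p f b) (h0 : κ ≤ 0) :
    κ ^ 2 * scoreVar p f κ ≤ 2 * tiltKL p f κ := by
  have := h.antitoneOn_tiltKL_sub (h0.trans_lt h.inv_pos) h.inv_pos h0
  simp only [tiltKL_zero h.sum_eq_one] at this
  linarith

lemma tendsto_tiltKL_atBot (h : IsReward p f b) :
    Filter.Tendsto (tiltKL p f) Filter.atBot Filter.atTop := by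
  obtain ⟨i₀, hi₀⟩ := h.exists_eq_zero
  obtain ⟨i₁, hi₁⟩ := h.exists_eq_bound
  have lower : Filter.Tendsto (fun κ => p i₁ * log (1 - κ * b) + log (p i₀))
      Filter.atBot Filter.atTop := by
    refine Filter.tendsto_atTop_add_const_right _ _ (Filter.Tendsto.const_mul_atTop (h.pos i₁)
      (tendsto_log_atTop.comp (Filter.tendsto_atTop_add_const_left _ 1 ?_)))
    exact Filter.tendsto_neg_atBot_atTop.comp (Filter.tendsto_id.atBot_mul_const h.bound_pos)
  refine Filter.tendsto_atTop_mono' _ ?_ lower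
  filter_upwards [Filter.eventually_le_atBot 0] with κ h0
  have hκ := h0.trans_lt h.inv_pos
  have one_le (j : ι) : 1 ≤ 1 - κ * f j := by
    linarith [mul_nonpos_of_nonpos_of_nonneg h0 (h.mem_Icc j).1]
  have mass_ge := h.div_le_tiltMass hκ i₀
  rw [hi₀, mul_zero, sub_zero, div_one] at mass_ge
  refine add_le_add ?_ (log_le_log (h.pos i₀) mass_ge)
  rw [← hi₁]
  exact Finset.single_le_sum (f := fun j => p j * log (1 - κ * f j))
    (fun j _ => mul_nonneg (h.pos j).le (log_nonneg (one_le j))) (Finset.mem_univ i₁)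

lemma bound_sub_tiltMean_eq (h : IsReward p f b) (hκ : κ < b⁻¹) :
    b - tiltMean p f κ = (∑ j, p j * (b - f j) / (1 - κ * f j)) / tiltMass p f κ := by
  rw [tiltMean, sub_eq_iff_eq_add, ← add_div, eq_div_iff (h.tiltMass_pos hκ).ne', scoreMean,
    tiltMass, Finset.mul_sum, ← Finset.sum_add_distrib]
  refine Finset.sum_congr rfl fun j _ => ?_
  rw [tiltScore]
  ring

lemma tiltMean_lt (h : IsReward p f b) (hκ : κ < b⁻¹) : tiltMean p f κ < b := by
  obtain ⟨i, hi⟩ := h.exists_eq_zero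
  rw [← sub_pos, h.bound_sub_tiltMean_eq hκ]
  refine div_pos (Finset.sum_pos' (fun j _ => ?_) ⟨i, Finset.mem_univ i, ?_⟩) (h.tiltMass_pos hκ)
  · have := h.one_sub_mul_pos hκ j
    exact div_nonneg (mul_nonneg (h.pos j).le (sub_nonneg.2 (h.mem_Icc j).2)) this.le
  · rw [hi, sub_zero]
    have := h.pos i
    have := h.bound_pos
    simp [*]

lemma le_tiltMean (h : IsReward p f b) {i : ι} (hi : f i = b) (hκ : κ < b⁻¹) :
    b - b * (1 - κ * b) / p i ≤ tiltMean p f κ := by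
  have hM := h.div_le_tiltMass hκ i
  have hd := h.one_sub_mul_pos hκ i
  have hp := h.pos i
  have hb := h.bound_pos
  rw [hi] at hM hd
  have numerator_le : ∑ j, p j * (b - f j) / (1 - κ * f j) ≤ b := by
    calc _ ≤ ∑ j, p j * b := Finset.sum_le_sum fun j _ => by
          rw [mul_div_assoc]
          refine mul_le_mul_of_nonneg_left ?_ (h.pos j).le
          rw [div_le_iff₀ (h.one_sub_mul_pos hκ j)]
          have : κ * b < 1 := by linarith
          nlinarith [(h.mem_Icc j).1]
      _ = b := by rw [← Finset.sum_mul, h.sum_eq_one, one_mul]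
  have : b - tiltMean p f κ ≤ b / (p i / (1 - κ * b)) := by
    rw [h.bound_sub_tiltMean_eq hκ]
    gcongr
  rw [div_div_eq_mul_div] at this
  linarith

lemma tiltMean_le (h : IsReward p f b) {i : ι} (hi : f i = 0) (hκ : κ < 0) :
    tiltMean p f κ ≤ 1 / (p i * -κ) := by
  have hκ' := hκ.trans h.inv_pos
  have hM := h.div_le_tiltMass hκ' i
  rw [hi, mul_zero, sub_zero, div_one] at hM
  have hp := h.pos i
  have hN : scoreMean p f κ ≤ 1 / -κ := h.scoreMean_le fun j => by
    rw [tiltScore, div_le_div_iff₀ (h.one_sub_mul_pos hκ' j) (neg_pos.2 hκ)]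
    linarith
  calc scoreMean p f κ / tiltMass p f κ ≤ 1 / -κ / p i := by
        have : 0 < -κ := neg_pos.2 hκ
        gcongr
    _ = 1 / (p i * -κ) := by rw [div_div, mul_comm]

lemma image_tiltMean (h : IsReward p f b) : tiltMean p f '' Iio b⁻¹ = Ioo 0 b := by
  refine Subset.antisymm ?_ fun x hx => ?_
  · rintro _ ⟨κ, hκ, rfl⟩
    exact ⟨h.tiltMean_pos hκ, h.tiltMean_lt hκ⟩
  obtain ⟨i₀, hi₀⟩ := h.exists_eq_zero
  obtain ⟨i₁, hi₁⟩ := h.exists_eq_bound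
  have hb := h.bound_pos
  have hx0 := hx.1
  have below : ∃ κ < b⁻¹, tiltMean p f κ ≤ x := by
    have hp := h.pos i₀
    have hκ : -(p i₀ * x)⁻¹ < 0 := by
      rw [neg_lt_zero]
      positivity
    refine ⟨_, hκ.trans h.inv_pos, (h.tiltMean_le hi₀ hκ).trans_eq ?_⟩
    field_simp
  have above : ∃ κ < b⁻¹, x ≤ tiltMean p f κ := by
    have hp := h.pos i₁
    have hbx : 0 < b - x := sub_pos.2 hx.2
    have κ_eq : (1 - p i₁ * (b - x) / b) * b⁻¹ * b = 1 - p i₁ * (b - x) / b :=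
      inv_mul_cancel_right₀ hb.ne' _
    have hκ : (1 - p i₁ * (b - x) / b) * b⁻¹ < b⁻¹ :=
      mul_lt_of_lt_one_left h.inv_pos (sub_lt_self _ (by positivity))
    refine ⟨_, hκ, le_trans (le_of_eq ?_) (h.le_tiltMean hi₁ hκ)⟩
    rw [κ_eq]
    field_simp
    ring
  obtain ⟨κ₁, hκ₁, h₁⟩ := below
  obtain ⟨κ₂, hκ₂, h₂⟩ := above
  exact isPreconnected_Iio.intermediate_value hκ₁ hκ₂
    (fun κ hκ => (h.hasDerivAt_tiltMean hκ).continuousAt.continuousWithinAt) ⟨h₁, h₂⟩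

end IsReward

end Tilt

section Kinf

variable {m : ℕ} {p f : Fin (m + 1) → ℝ} {κ b : ℝ}

lemma IsReward.klReal_eq (h : IsReward p f b) (q : Fin (m + 1) → ℝ) :
    klReal p q = ∑ j, p j * log (p j / q j) := by
  simp [klReal, (h.pos _).ne']

lemma IsReward.tiltKL_mem (h : IsReward p f b) (hκ : κ < b⁻¹) :
    ∃ q ∈ stdSimplex ℝ (Fin (m + 1)), (∀ i, q i = 0 → p i = 0) ∧
      ∑ i, f i * q i = tiltMean p f κ ∧ tiltKL p f κ = klReal p q := by
  have hM := h.tiltMass_pos hκ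
  have q_pos (j) : 0 < p j / (1 - κ * f j) / tiltMass p f κ :=
    div_pos (div_pos (h.pos j) (h.one_sub_mul_pos hκ j)) hM
  refine ⟨fun j => p j / (1 - κ * f j) / tiltMass p f κ, ⟨fun j => (q_pos j).le, ?_⟩,
    fun j hj => absurd hj (q_pos j).ne', ?_, ?_⟩
  · rw [← Finset.sum_div, ← tiltMass, div_self hM.ne']
  · rw [tiltMean, scoreMean, Finset.sum_div]
    refine Finset.sum_congr rfl fun j _ => ?_
    rw [tiltScore]
    ring
  · have log_ratio (j) : p j * log (p j / (p j / (1 - κ * f j) / tiltMass p f κ)) =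
        p j * log (1 - κ * f j) + p j * log (tiltMass p f κ) := by
      rw [div_div_eq_mul_div, div_div_eq_mul_div, mul_assoc, mul_div_cancel_left₀ _ (h.pos j).ne',
        log_mul hM.ne' (h.one_sub_mul_ne_zero hκ j), mul_add, add_comm]
    rw [h.klReal_eq]
    simp only [log_ratio, Finset.sum_add_distrib, ← Finset.sum_mul, h.sum_eq_one, one_mul, tiltKL]

lemma IsReward.tiltKL_le_klReal (h : IsReward p f b) (hκ : κ < b⁻¹) {q : Fin (m + 1) → ℝ}
    (hq : q ∈ stdSimplex ℝ (Fin (m + 1))) (hqp : ∀ i, q i = 0 → p i = 0)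
    (hqf : ∑ i, f i * q i = tiltMean p f κ) : tiltKL p f κ ≤ klReal p q := by
  set M := tiltMass p f κ with hM_def
  have hM : 0 < M := h.tiltMass_pos hκ
  have q_pos (j) : 0 < q j := (hq.1 j).lt_of_ne fun hj => (h.pos j).ne' (hqp j hj.symm)
  have pointwise (j) : p j * log (1 - κ * f j) + p j * log M + (p j - M * (q j - κ * (f j * q j)))
      ≤ p j * log (p j / q j) := by
    have hp := h.pos j
    have hd := h.one_sub_mul_pos hκ j
    have := log_le_sub_one_of_pos (x := q j * (1 - κ * f j) * M / p j)
      (div_pos (mul_pos (mul_pos (q_pos j) hd) hM) hp)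
    rw [log_div (mul_pos (mul_pos (q_pos j) hd) hM).ne' hp.ne',
      log_mul (mul_pos (q_pos j) hd).ne' hM.ne', log_mul (q_pos j).ne' hd.ne',
      le_sub_iff_add_le, le_div_iff₀ hp] at this
    rw [log_div hp.ne' (q_pos j).ne']
    linarith
  rw [h.klReal_eq]
  refine le_trans (le_of_eq ?_) (Finset.sum_le_sum fun j _ => pointwise j)
  simp only [Finset.sum_add_distrib, Finset.sum_sub_distrib, ← Finset.mul_sum, ← Finset.sum_mul,
    h.sum_eq_one, hqf, hq.2]
  rw [tiltKL, tiltMean, ← hM_def]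
  field_simp
  rw [hM_def, tiltMass_eq h.sum_eq_one (h.one_sub_mul_ne_zero hκ)]
  ring

lemma IsReward.Kinfstar_eq (h : IsReward p f b) (hκ : κ < b⁻¹) :
    Kinfstar p (tiltMean p f κ) f = tiltKL p f κ := by
  refine IsLeast.csInf_eq ⟨h.tiltKL_mem hκ, ?_⟩
  rintro _ ⟨q, hq, hqp, hqf, rfl⟩
  exact h.tiltKL_le_klReal hκ hq hqp hqf

lemma IsReward.Afun_eq (h : IsReward p f b) (hκ : κ < b⁻¹) :
    Afun p (tiltMean p f κ) f = Real.sign κ * √(2 * tiltKL p f κ) := by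
  rw [Afun, h.Kinfstar_eq hκ, ← tiltMean_zero h.sum_eq_one]
  congr 1
  have mono := h.strictMonoOn_tiltMean
  rcases lt_trichotomy κ 0 with h0 | rfl | h0
  · rw [Real.sign_of_neg h0, Real.sign_of_neg (sub_neg.2 (mono hκ h.inv_pos h0))]
  · rw [sub_self]
  · rw [Real.sign_of_pos h0, Real.sign_of_pos (sub_pos.2 (mono h.inv_pos hκ h0))]

end Kinf

section GammaSlice

variable {a r x t : ℝ}

lemma gammaPDFReal_eq_mul_exp_mul {s : ℝ} (hr : 0 ≤ r) (hs : 0 < s) :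
    gammaPDFReal a r x = (r / s) ^ a * rexp ((s - r) * x) * gammaPDFReal a s x := by
  have exponent : rexp (-(r * x)) = rexp ((s - r) * x) * rexp (-(s * x)) := by
    rw [← Real.exp_add]
    ring_nf
  have : s ^ a ≠ 0 := (Real.rpow_pos_of_pos hs a).ne'
  rw [gammaPDFReal, gammaPDFReal, Real.div_rpow hr hs.le, exponent]
  split_ifs
  · field_simp
  · simp

lemma integrable_gammaPDFReal (ha : 0 < a) (hr : 0 < r) : Integrable (gammaPDFReal a r) := by
  refine ⟨(measurable_gammaPDFReal a r).aestronglyMeasurable, ?_⟩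
  rw [hasFiniteIntegral_iff_ofReal (ae_of_all _ (gammaPDFReal_nonneg ha hr))]
  exact (lintegral_gammaPDF_eq_one ha hr).trans_lt ENNReal.one_lt_top

lemma integral_gammaPDFReal (ha : 0 < a) (hr : 0 < r) : ∫ x, gammaPDFReal a r x = 1 := by
  rw [integral_eq_lintegral_of_nonneg_ae (ae_of_all _ (gammaPDFReal_nonneg ha hr))
    (measurable_gammaPDFReal a r).aestronglyMeasurable]
  exact congrArg ENNReal.toReal (lintegral_gammaPDF_eq_one ha hr)

lemma integral_gammaMeasure {E : Type*} [NormedAddCommGroup E] [NormedSpace ℝ E]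
    (ha : 0 < a) (hr : 0 < r) (g : ℝ → E) :
    ∫ x, g x ∂gammaMeasure a r = ∫ x, gammaPDFReal a r x • g x := by
  rw [gammaMeasure, integral_withDensity_eq_integral_toReal_smul (f := gammaPDF a r)
    (measurable_gammaPDFReal a r).ennreal_ofReal (by simp [gammaPDF])]
  simp [gammaPDF, ENNReal.toReal_ofReal (gammaPDFReal_nonneg ha hr _)]

lemma exp_mul_gammaPDFReal (hr : 0 < r) (ht : t < r) :
    gammaPDFReal a r x * rexp (t * x) = (1 - t / r) ^ (-a) * gammaPDFReal a (r - t) x := by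
  have : 0 < r - t := by linarith
  have ratio : (r / (r - t)) ^ a = (1 - t / r) ^ (-a) := by
    rw [Real.rpow_neg_eq_inv_rpow, one_sub_div hr.ne', inv_div]
  rw [gammaPDFReal_eq_mul_exp_mul hr.le this, ratio]
  have cancel : rexp ((r - t - r) * x) * rexp (t * x) = 1 := by
    rw [← Real.exp_add, ← add_mul, sub_sub_cancel_left, neg_add_cancel, zero_mul, Real.exp_zero]
  linear_combination (1 - t / r) ^ (-a) * gammaPDFReal a (r - t) x * cancel

lemma mgf_gammaMeasure (ha : 0 < a) (hr : 0 < r) (ht : t < r) :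
    mgf id (gammaMeasure a r) t = (1 - t / r) ^ (-a) := by
  simp only [mgf, integral_gammaMeasure ha hr, id, smul_eq_mul, exp_mul_gammaPDFReal hr ht]
  rw [integral_const_mul, integral_gammaPDFReal ha (by linarith), mul_one]

lemma Iio_subset_integrableExpSet_gammaMeasure (ha : 0 < a) (hr : 0 < r) :
    Iio r ⊆ integrableExpSet id (gammaMeasure a r) := fun t (ht : t < r) => by
  have := isProbabilityMeasure_gammaMeasure ha hr
  refine mgf_pos_iff.mp ?_
  rw [mgf_gammaMeasure ha hr ht]
  exact Real.rpow_pos_of_pos (sub_pos.mpr ((div_lt_one hr).mpr ht)) _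

lemma complexMGF_gammaMeasure (ha : 0 < a) (hr : 0 < r) {z : ℂ} (hz : z.re < r) :
    complexMGF id (gammaMeasure a r) z = (1 - z / r) ^ (-(a : ℂ)) := by
  let U : Set ℂ := {w | w.re < r}
  have analytic_left : AnalyticOnNhd ℂ (complexMGF id (gammaMeasure a r)) U :=
    analyticOnNhd_complexMGF.mono fun w hw =>
      isOpen_Iio.subset_interior_iff.mpr (Iio_subset_integrableExpSet_gammaMeasure ha hr) hw
  have analytic_right : AnalyticOnNhd ℂ (fun w : ℂ => (1 - w / r) ^ (-(a : ℂ))) U := by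
    refine DifferentiableOn.analyticOnNhd (fun w hw => ?_)
      (isOpen_lt Complex.continuous_re continuous_const)
    refine (DifferentiableAt.cpow_const (by fun_prop) (Or.inl ?_)).differentiableWithinAt
    have : w.re / r < 1 := (div_lt_one hr).mpr hw
    simpa using this
  have eq_of_real {t : ℝ} (ht : t < r) :
      complexMGF id (gammaMeasure a r) t = (1 - t / r : ℂ) ^ (-(a : ℂ)) := by
    have : 0 ≤ 1 - t / r := sub_nonneg.mpr ((div_lt_one hr).mpr ht).le
    rw [complexMGF_ofReal, mgf_gammaMeasure ha hr ht, Complex.ofReal_cpow this]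
    push_cast
    rfl
  have real_punctured : Filter.Tendsto Complex.ofReal (nhdsWithin 0 {0}ᶜ) (nhdsWithin 0 {0}ᶜ) :=
    Complex.continuous_ofReal.continuousWithinAt.tendsto_nhdsWithin fun t ht => by simpa using ht
  refine analytic_left.eqOn_of_preconnected_of_frequently_eq analytic_right
    ((convex_Iio r).linear_preimage Complex.reLm).isPreconnected (z₀ := 0) (by simpa [U]) ?_ hz
  refine real_punctured.frequently (Filter.Eventually.frequently ?_)
  filter_upwards [nhdsWithin_le_nhds (Iio_mem_nhds hr)] with t ht using eq_of_real ht

lemma integral_gammaPDFReal_mul_cexp (ha : 0 < a) (hr : 0 < r) (t : ℝ) :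
    ∫ x, (gammaPDFReal a r x : ℂ) * Complex.exp (t * x * Complex.I) =
      (1 - (t / r : ℝ) * Complex.I) ^ (-(a : ℂ)) := by
  have := complexMGF_gammaMeasure ha hr (z := t * Complex.I) (by simpa)
  simp only [complexMGF, integral_gammaMeasure ha hr, id, Complex.real_smul] at this
  convert this using 4
  · ring_nf
  · push_cast
    ring

lemma continuous_cpow_one_sub_mul_I (a r : ℝ) :
    Continuous fun t : ℝ => (1 - (t / r : ℝ) * Complex.I) ^ (-(a : ℂ)) :=
  Continuous.cpow (by fun_prop) continuous_const fun t => one_sub_mul_I_mem_slitPlane (t / r)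

lemma integrable_cpow_one_sub_mul_I (ha : 1 < a) (hr : r ≠ 0) :
    Integrable fun t : ℝ => (1 - (t / r : ℝ) * Complex.I) ^ (-(a : ℂ)) := by
  have japanese : Integrable fun t : ℝ => (1 + ‖t / r‖ ^ 2) ^ (-a / 2) :=
    (integrable_rpow_neg_one_add_norm_sq (by simpa)).comp_div hr
  refine japanese.mono' (continuous_cpow_one_sub_mul_I a r).aestronglyMeasurable
    (ae_of_all _ fun t => le_of_eq ?_)
  rw [← Complex.ofReal_neg, Complex.norm_cpow_real, norm_one_sub_mul_I,
    ← Real.rpow_mul (by positivity), Real.norm_eq_abs, sq_abs]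
  ring_nf

lemma continuous_gammaPDFReal (ha : 1 < a) : Continuous (gammaPDFReal a r) := by
  unfold gammaPDFReal
  refine Continuous.if_le (Continuous.mul (continuous_const.mul
    (Real.continuous_rpow_const (by linarith))) (by fun_prop)) continuous_const
    continuous_const continuous_id ?_
  rintro x rfl
  rw [Real.zero_rpow (by linarith)]
  simp

open FourierTransform in
lemma gammaPDFReal_eq_integral (ha : 1 < a) (hr : 0 < r) (x : ℝ) :
    (gammaPDFReal a r x : ℂ) = (2 * π : ℝ)⁻¹ * ∫ t : ℝ,
      (1 - (-t / r : ℝ) * Complex.I) ^ (-(a : ℂ)) * Complex.exp (t * x * Complex.I) := by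
  let F : ℝ → ℂ := fun t => (1 - (-t / r : ℝ) * Complex.I) ^ (-(a : ℂ))
  have fourier_eq : 𝓕 (fun x => (gammaPDFReal a r x : ℂ)) = fun w => F (2 * π * w) := by
    ext w
    rw [Real.fourier_real_eq_integral_exp_smul]
    refine (integral_congr_ae (ae_of_all _ fun y => ?_)).trans
      (integral_gammaPDFReal_mul_cexp (by linarith) hr (-(2 * π * w)))
    simp only [smul_eq_mul]
    rw [mul_comm]
    push_cast
    ring_nf
  have integrable_F : Integrable F := by
    simpa [F] using (integrable_cpow_one_sub_mul_I ha hr.ne').comp_neg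
  have continuous_ofReal_gammaPDFReal : Continuous fun x => (gammaPDFReal a r x : ℂ) :=
    Complex.continuous_ofReal.comp (continuous_gammaPDFReal ha)
  have inversion := (integrable_gammaPDFReal (by linarith) hr).ofReal.fourierInv_fourier_eq
    (v := x) (fourier_eq ▸ integrable_F.comp_mul_left' (by positivity))
    continuous_ofReal_gammaPDFReal.continuousAt
  rw [← inversion, fourier_eq, Real.fourierInv_eq']
  have := Measure.integral_comp_mul_left
    (fun t : ℝ => F t * Complex.exp (t * x * Complex.I)) (2 * π)
  rw [abs_of_pos (by positivity), Complex.real_smul] at this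
  rw [← this]
  refine integral_congr_ae (ae_of_all _ fun w => ?_)
  have inner_eq : inner ℝ w x = w * x := by simp [mul_comm]
  simp only [smul_eq_mul, inner_eq]
  rw [mul_comm]
  push_cast
  ring_nf

variable {ι : Type*} [Fintype ι] {α ρ c : ι → ℝ}

/-- The joint density of independent variables `G_j ∼ Gamma(α_j, ρ_j)`. -/
def gammaProdPDF (α ρ G : ι → ℝ) : ℝ := ∏ j, gammaPDFReal (α j) (ρ j) (G j)

lemma gammaProdPDF_nonneg (hα : ∀ j, 0 < α j) (hρ : ∀ j, 0 < ρ j) (G : ι → ℝ) :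
    0 ≤ gammaProdPDF α ρ G :=
  Finset.prod_nonneg fun j _ => gammaPDFReal_nonneg (hα j) (hρ j) (G j)

@[fun_prop]
lemma measurable_gammaProdPDF : Measurable (gammaProdPDF α ρ) :=
  Finset.measurable_fun_prod _ fun j _ =>
    (measurable_gammaPDFReal (α j) (ρ j)).comp (measurable_pi_apply j)

lemma integrable_gammaProdPDF (hα : ∀ j, 0 < α j) (hρ : ∀ j, 0 < ρ j) :
    Integrable (gammaProdPDF α ρ) :=
  Integrable.fintype_prod fun j => integrable_gammaPDFReal (hα j) (hρ j)

lemma integral_gammaProdPDF_mul_cexp (hα : ∀ j, 0 < α j) (hρ : ∀ j, 0 < ρ j) (t : ℝ) :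
    ∫ G, (gammaProdPDF α ρ G : ℂ) * Complex.exp (t * (∑ j, c j * G j : ℝ) * Complex.I) =
      gammaSumCharFun α (fun j => c j / ρ j) t := by
  have factorization (G : ι → ℝ) :
      (gammaProdPDF α ρ G : ℂ) * Complex.exp (t * (∑ j, c j * G j : ℝ) * Complex.I) =
        ∏ j, (gammaPDFReal (α j) (ρ j) (G j) *
          Complex.exp ((t * c j : ℝ) * G j * Complex.I)) := by
    rw [Finset.prod_mul_distrib, ← Complex.exp_sum, gammaProdPDF]
    push_cast
    simp only [Finset.mul_sum, Finset.sum_mul, mul_assoc]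
  simp only [factorization]
  rw [integral_fintype_prod_volume_eq_prod fun j (x : ℝ) =>
    (gammaPDFReal (α j) (ρ j) x : ℂ) * Complex.exp ((t * c j : ℝ) * x * Complex.I)]
  simp only [integral_gammaPDFReal_mul_cexp (hα _) (hρ _), gammaSumCharFun, mul_div_assoc]

/-- The integrand of the Parseval formula for the density of `∑ j, c_j G_j` and that of
`Gamma(a, r)`; the integral over `t` is Fourier inversion of the latter. -/
def gammaSliceIntegrand (α ρ c : ι → ℝ) (a r : ℝ) (G : ι → ℝ) (t : ℝ) : ℂ :=
  (1 - (-t / r : ℝ) * Complex.I) ^ (-(a : ℂ)) *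
    (gammaProdPDF α ρ G * Complex.exp (t * (∑ j, c j * G j : ℝ) * Complex.I))

lemma integrable_gammaSliceIntegrand (hα : ∀ j, 0 < α j) (hρ : ∀ j, 0 < ρ j) (ha : 1 < a)
    (hr : 0 < r) : Integrable (Function.uncurry (gammaSliceIntegrand α ρ c a r))
      ((volume : Measure (ι → ℝ)).prod volume) := by
  have integrable_charFun : Integrable fun t : ℝ => (1 - (-t / r : ℝ) * Complex.I) ^ (-(a : ℂ)) :=
    by simpa using (integrable_cpow_one_sub_mul_I ha hr.ne').comp_neg
  have integrable_prod :=
    (integrable_gammaProdPDF hα hρ).ofReal (𝕜 := ℂ).mul_prod integrable_charFun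
  have measurable_phase : Measurable fun q : (ι → ℝ) × ℝ =>
      Complex.exp (q.2 * (∑ j, c j * q.1 j : ℝ) * Complex.I) := by fun_prop
  refine (integrable_prod.mul_bdd (c := 1) measurable_phase.aestronglyMeasurable
    (ae_of_all _ fun q => ?_)).congr (ae_of_all _ fun q => ?_)
  · rw [← Complex.ofReal_mul, Complex.norm_exp_ofReal_mul_I]
  · simp only [Function.uncurry, gammaSliceIntegrand, mul_assoc]
    rw [mul_left_comm]
    rfl

lemma ofReal_gammaProdPDF_mul_gammaPDFReal (ha : 1 < a) (hr : 0 < r) (G : ι → ℝ) :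
    ((gammaProdPDF α ρ G * gammaPDFReal a r (∑ j, c j * G j) : ℝ) : ℂ) =
      (2 * π : ℝ)⁻¹ * ∫ t, gammaSliceIntegrand α ρ c a r G t := by
  simp only [gammaSliceIntegrand, mul_left_comm _ (gammaProdPDF α ρ G : ℂ)]
  rw [integral_const_mul, Complex.ofReal_mul, gammaPDFReal_eq_integral ha hr]
  ring

lemma integrable_gammaProdPDF_mul_gammaPDFReal (hα : ∀ j, 0 < α j) (hρ : ∀ j, 0 < ρ j)
    (ha : 1 < a) (hr : 0 < r) :
    Integrable fun G => gammaProdPDF α ρ G * gammaPDFReal a r (∑ j, c j * G j) := by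
  have := (integrable_gammaSliceIntegrand (c := c) hα hρ ha hr).integral_prod_left
  refine ((this.const_mul ((2 * π)⁻¹ : ℝ)).re).congr (ae_of_all _ fun G => ?_)
  simp only [Function.uncurry, ← ofReal_gammaProdPDF_mul_gammaPDFReal ha hr]
  exact Complex.ofReal_re _

theorem ofReal_integral_gammaProdPDF_mul_gammaPDFReal (hα : ∀ j, 0 < α j) (hρ : ∀ j, 0 < ρ j)
    (ha : 1 < a) (hr : 0 < r) :
    ((∫ G, gammaProdPDF α ρ G * gammaPDFReal a r (∑ j, c j * G j) : ℝ) : ℂ) =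
      (2 * π : ℝ)⁻¹ * ∫ t : ℝ, (1 - (-t / r : ℝ) * Complex.I) ^ (-(a : ℂ)) *
        gammaSumCharFun α (fun j => c j / ρ j) t := by
  rw [← integral_complex_ofReal]
  simp only [ofReal_gammaProdPDF_mul_gammaPDFReal ha hr]
  rw [integral_const_mul, integral_integral_swap (integrable_gammaSliceIntegrand hα hρ ha hr)]
  simp only [gammaSliceIntegrand, integral_const_mul, integral_gammaProdPDF_mul_cexp hα hρ]

end GammaSlice

section SaddlePoint

lemma gammaProdPDF_one_mul_gammaPDFReal_one {ι : Type*} [Fintype ι] {α c : ι → ℝ} {a lam : ℝ}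
    (hc : ∀ j, 0 < 1 - lam * c j) (hlam : 0 < 1 + lam) (G : ι → ℝ) :
    gammaProdPDF α 1 G * gammaPDFReal a 1 (∑ j, c j * G j) =
      (1 + lam) ^ (-a) * (∏ j, (1 - lam * c j) ^ (-α j)) *
        (gammaProdPDF α (fun j => 1 - lam * c j) G *
          gammaPDFReal a (1 + lam) (∑ j, c j * G j)) := by
  have rate_change {s b x : ℝ} (hs : 0 < s) :
      gammaPDFReal b 1 x = s ^ (-b) * rexp ((s - 1) * x) * gammaPDFReal b s x := by
    rw [gammaPDFReal_eq_mul_exp_mul zero_le_one hs, one_div, Real.rpow_neg_eq_inv_rpow]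
  have exp_cancel : (∏ j, rexp ((1 - lam * c j - 1) * G j)) *
      rexp ((1 + lam - 1) * ∑ j, c j * G j) = 1 := by
    rw [← Real.exp_sum, ← Real.exp_add, Real.exp_eq_one_iff, Finset.mul_sum,
      ← Finset.sum_add_distrib]
    exact Finset.sum_eq_zero fun j _ => by ring
  simp only [gammaProdPDF, Pi.one_apply]
  rw [Finset.prod_congr rfl fun j _ => rate_change (hc j), rate_change hlam,
    Finset.prod_mul_distrib, Finset.prod_mul_distrib]
  linear_combination (1 + lam) ^ (-a) * (∏ j, (1 - lam * c j) ^ (-α j)) *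
    (∏ j, gammaPDFReal (α j) (1 - lam * c j) (G j)) *
    gammaPDFReal a (1 + lam) (∑ j, c j * G j) * exp_cancel

lemma integral_cpow_mul_gammaSumCharFun {m : ℕ} {α a : Fin (m + 1) → ℝ} {d : ℝ} (hd : 0 < d) :
    ∫ t : ℝ, (1 - (t * a 0 : ℝ) * Complex.I) ^ (-((α 0 + 1 : ℝ) : ℂ)) *
        gammaSumCharFun (Fin.tail α) (Fin.tail a) t =
      d * saddleIntegral α (fun j => d * a j) (d * a 0) := by
  have integrand_eq (t : ℝ) : (1 - (t * a 0 : ℝ) * Complex.I) ^ (-((α 0 + 1 : ℝ) : ℂ)) *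
      gammaSumCharFun (Fin.tail α) (Fin.tail a) t =
        (1 - (t * a 0 : ℝ) * Complex.I)⁻¹ * gammaSumCharFun α a t := by
    rw [gammaSumCharFun, gammaSumCharFun, Fin.prod_univ_succ, ← mul_assoc, Complex.ofReal_add,
      neg_add_rev, Complex.cpow_add _ _ (one_sub_mul_I_ne_zero _), Complex.ofReal_one,
      Complex.cpow_neg_one]
    rfl
  have scaled (t : ℝ) : (1 - (t * (d * a 0) : ℝ) * Complex.I)⁻¹ *
      gammaSumCharFun α (fun j => d * a j) t =
        (1 - ((d * t) * a 0 : ℝ) * Complex.I)⁻¹ * gammaSumCharFun α a (d * t) := by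
    simp only [gammaSumCharFun, ← mul_assoc, mul_comm t d]
  simp only [integrand_eq, saddleIntegral, scaled]
  rw [Measure.integral_comp_mul_left
    (fun t : ℝ => (1 - (t * a 0 : ℝ) * Complex.I)⁻¹ * gammaSumCharFun α a t) d,
    abs_of_pos (inv_pos.mpr hd), ← Complex.real_smul, smul_inv_smul₀ hd.ne']

/-- The density at `0` of `∑ j, c_j G_j` for independent `G_0 ∼ Gamma(α_0 + 1, 1)` and
`G_j ∼ Gamma(α_j, 1)`, `j ≥ 1`, when `c_0 = -1`. -/
def gammaSlice {m : ℕ} (α : Fin (m + 1) → ℝ) (c : Fin m → ℝ) : ℝ :=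
  ∫ G : Fin m → ℝ, gammaProdPDF (Fin.tail α) 1 G * gammaPDFReal (α 0 + 1) 1 (∑ j, c j * G j)

lemma gammaSlice_eq_saddleIntegral {m : ℕ} {α c : Fin (m + 1) → ℝ} {lam d : ℝ}
    (hα : ∀ j, 0 < α j) (hc0 : c 0 = -1) (hc : ∀ j, 0 < 1 - lam * c j) (hd : 0 < d) :
    gammaSlice α (Fin.tail c) = (1 - lam * c 0)⁻¹ * (∏ j, (1 - lam * c j) ^ (-α j)) *
      (d / (2 * π)) *
        (saddleIntegral α (fun j => d * (c j / (1 - lam * c j)))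
          (d * (c 0 / (1 - lam * c 0)))).re := by
  have hlam : 0 < 1 + lam := by simpa [hc0] using hc 0
  have tilted := ofReal_integral_gammaProdPDF_mul_gammaPDFReal (α := Fin.tail α)
    (ρ := fun j => 1 - lam * Fin.tail c j) (c := Fin.tail c) (a := α 0 + 1)
    (fun j => hα j.succ) (fun j => hc j.succ) (by linarith [hα 0]) hlam
  have charFun_eq (t : ℝ) : -t / (1 + lam) = t * (c 0 / (1 - lam * c 0)) := by
    rw [hc0]
    ring
  simp only [charFun_eq] at tilted
  have := tilted.trans (congrArg _ (integral_cpow_mul_gammaSumCharFun (α := α)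
    (a := fun j => c j / (1 - lam * c j)) hd))
  rw [← mul_assoc, ← Complex.ofReal_mul] at this
  have real_eq := congrArg Complex.re this
  rw [Complex.ofReal_re, Complex.re_ofReal_mul] at real_eq
  simp only [gammaSlice, gammaProdPDF_one_mul_gammaPDFReal_one (α := Fin.tail α) (c := Fin.tail c)
    (fun j => hc j.succ) hlam, integral_const_mul]
  rw [real_eq, Fin.prod_univ_succ, hc0, mul_neg_one, sub_neg_eq_add, neg_add_rev,
    Real.rpow_add hlam, Real.rpow_neg_one]
  simp only [Fin.tail]
  ring

variable {m : ℕ} {A b κ : ℝ} {p f : Fin (m + 1) → ℝ}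

/-- The score of the `κ`-tilted law, centred under `p` and scaled to unit variance under the
weights `A • p`. -/
def normalizedScore (A : ℝ) (p f : Fin (m + 1) → ℝ) (κ : ℝ) (j : Fin (m + 1)) : ℝ :=
  (tiltScore f κ j - scoreMean p f κ) / √(A * scoreVar p f κ)

/-- The ratio of the exact density to its saddle-point approximation: the saddle integral of the
normalised score, divided by its limit `√(2π)`. -/
def saddleRatio (A : ℝ) (p f : Fin (m + 1) → ℝ) (κ : ℝ) : ℝ :=
  (saddleIntegral (A • p) (normalizedScore A p f κ) (normalizedScore A p f κ 0)).re / √(2 * π)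

lemma IsReward.prod_rpow_eq_exp (h : IsReward p f b) (hκ : κ < b⁻¹) :
    ∏ j, (tiltMass p f κ * (1 - κ * f j)) ^ (-(A * p j)) = rexp (-(A * tiltKL p f κ)) := by
  have factor (j : Fin (m + 1)) : (tiltMass p f κ * (1 - κ * f j)) ^ (-(A * p j)) =
      rexp (-A * (p j * log (1 - κ * f j) + p j * log (tiltMass p f κ))) := by
    have hM := h.tiltMass_pos hκ
    have hj := h.one_sub_mul_pos hκ j
    rw [Real.rpow_def_of_pos (mul_pos hM hj), Real.log_mul hM.ne' hj.ne']
    ring_nf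
  rw [Finset.prod_congr rfl fun j _ => factor j, ← Real.exp_sum, ← Finset.mul_sum,
    Finset.sum_add_distrib, ← Finset.sum_mul, h.sum_eq_one, one_mul, neg_mul, tiltKL]

lemma IsReward.gammaSlice_eq (h : IsReward p f b) (hA : 0 < A) (hf0 : f 0 = 0) (hκ : κ < b⁻¹) :
    gammaSlice (A • p) (fun j => Fin.tail f j / tiltMean p f κ - 1) =
      scoreMean p f κ / √(A * scoreVar p f κ) * (rexp (-(A * tiltKL p f κ)) / √(2 * π)) *
        saddleRatio A p f κ := by
  have hM := h.tiltMass_pos hκ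
  have hN := h.scoreMean_pos hκ
  have hS : 0 < √(A * scoreVar p f κ) := Real.sqrt_pos.2 (mul_pos hA (h.scoreVar_pos hκ))
  have one_sub_eq (j : Fin (m + 1)) :
      1 - κ * scoreMean p f κ * (f j / tiltMean p f κ - 1) = tiltMass p f κ * (1 - κ * f j) := by
    rw [tiltMean]
    field_simp
    linear_combination -tiltMass_eq h.sum_eq_one (h.one_sub_mul_ne_zero hκ)
  have score_eq (j : Fin (m + 1)) :
      scoreMean p f κ * tiltMass p f κ / √(A * scoreVar p f κ) *
        ((f j / tiltMean p f κ - 1) / (tiltMass p f κ * (1 - κ * f j))) =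
      normalizedScore A p f κ j := by
    have := h.one_sub_mul_ne_zero hκ j
    rw [normalizedScore, tiltScore, tiltMean, div_sub' this]
    field_simp
    linear_combination f j / (1 - κ * f j) * tiltMass_eq h.sum_eq_one (h.one_sub_mul_ne_zero hκ)
  have slice_eq := gammaSlice_eq_saddleIntegral (α := A • p)
    (c := fun j => f j / tiltMean p f κ - 1) (lam := κ * scoreMean p f κ)
    (d := scoreMean p f κ * tiltMass p f κ / √(A * scoreVar p f κ))
    (fun j => mul_pos hA (h.pos j)) (by simp [hf0])
    (fun j => one_sub_eq j ▸ mul_pos hM (h.one_sub_mul_pos hκ j)) (by positivity)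
  simp only [one_sub_eq, score_eq, Pi.smul_apply, smul_eq_mul, h.prod_rpow_eq_exp hκ]
    at slice_eq
  refine slice_eq.trans ?_
  rw [hf0, mul_zero, sub_zero, mul_one, saddleRatio, ← Real.sq_sqrt (show 0 ≤ 2 * π by positivity),
    Real.sqrt_sq (Real.sqrt_nonneg (2 * π))]
  field_simp

end SaddlePoint

section Dirichlet

variable {m : ℕ}

/-- The point of the hyperplane `∑ j, w_j = 1` whose first `m` coordinates are given. -/
def simplexPoint (x : Fin m → ℝ) : Fin (m + 1) → ℝ := Fin.snoc x (1 - ∑ i, x i)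

@[simp]
lemma simplexPoint_castSucc (x : Fin m → ℝ) (i : Fin m) : simplexPoint x i.castSucc = x i :=
  Fin.snoc_castSucc (α := fun _ => ℝ) ..

@[simp]
lemma simplexPoint_last (x : Fin m → ℝ) : simplexPoint x (Fin.last m) = 1 - ∑ i, x i :=
  Fin.snoc_last (α := fun _ => ℝ) ..

@[simp]
lemma sum_simplexPoint (x : Fin m → ℝ) : ∑ j, simplexPoint x j = 1 := by
  simp [Fin.sum_univ_castSucc]

lemma forall_simplexPoint_nonneg_iff (x : Fin m → ℝ) :
    (∀ j, 0 ≤ simplexPoint x j) ↔ (∀ i, 0 ≤ x i) ∧ ∑ i, x i ≤ 1 := by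
  simp [Fin.forall_fin_succ']

@[fun_prop]
lemma measurable_simplexPoint : Measurable (simplexPoint (m := m)) :=
  measurable_pi_lambda _ fun j => by
    induction j using Fin.lastCases with
    | last => simp only [simplexPoint_last]; fun_prop
    | cast i => simp only [simplexPoint_castSucc]; fun_prop

lemma lintegral_insertNth (i : Fin (m + 1)) {F : (Fin (m + 1) → ℝ) → ℝ≥0∞} (hF : Measurable F) :
    ∫⁻ G, F G = ∫⁻ y : Fin m → ℝ, ∫⁻ g : ℝ, F (i.insertNth g y) := by
  have preserving := (volume_preserving_piFinSuccAbove (fun _ : Fin (m + 1) => ℝ) i).symm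
  rw [← preserving.lintegral_comp hF, Measure.volume_eq_prod, lintegral_prod_symm]
  · rfl
  · exact (hF.comp preserving.measurable).aemeasurable

lemma lintegral_eq_lintegral_smul {F : (Fin m → ℝ) → ℝ≥0∞} (hF : Measurable F) {r : ℝ}
    (hr : r ≠ 0) : ∫⁻ y, F y = ENNReal.ofReal (|r| ^ m) * ∫⁻ x, F (r • x) := by
  have hr0 : 0 < |r| ^ m := pow_pos (abs_pos.2 hr) m
  rw [← lintegral_map hF (measurable_const_smul r), Measure.map_addHaar_smul _ hr,
    lintegral_smul_measure, smul_eq_mul, ← mul_assoc, ← ENNReal.ofReal_mul hr0.le,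
    Module.finrank_fin_fun, abs_inv, abs_pow, mul_inv_cancel₀ hr0.ne', ENNReal.ofReal_one, one_mul]

theorem lintegral_eq_lintegral_smul_simplexPoint {F : (Fin (m + 1) → ℝ) → ℝ≥0∞}
    (hF : Measurable F) :
    ∫⁻ G, F G = ∫⁻ r : ℝ, ENNReal.ofReal (|r| ^ m) * ∫⁻ x, F (r • simplexPoint x) := by
  have hyperplane_measurable :
      Measurable fun q : (Fin m → ℝ) × ℝ => (Fin.snoc q.1 (q.2 - ∑ i, q.1 i) : Fin (m + 1) → ℝ) :=
    measurable_pi_lambda _ fun j => by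
      induction j using Fin.lastCases with
      | last => simp only [Fin.snoc_last]; fun_prop
      | cast i => simp only [Fin.snoc_castSucc]; fun_prop
  have translate (y : Fin m → ℝ) : ∫⁻ g : ℝ, F ((Fin.last m).insertNth g y) =
      ∫⁻ r : ℝ, F (Fin.snoc y (r - ∑ i, y i)) := by
    simp only [Fin.insertNth_last']
    exact (lintegral_sub_right_eq_self (fun g => F (Fin.snoc y g)) (∑ i, y i)).symm
  have smul_simplexPoint (r : ℝ) (x : Fin m → ℝ) :
      (Fin.snoc (r • x) (r - ∑ i, (r • x) i) : Fin (m + 1) → ℝ) = r • simplexPoint x := by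
    ext j
    induction j using Fin.lastCases with
    | last => simp [← Finset.mul_sum, mul_sub]
    | cast i => simp
  rw [lintegral_insertNth (Fin.last m) hF, lintegral_congr translate,
    lintegral_lintegral_swap
      (f := fun y r => F (Fin.snoc y (r - ∑ i, y i)))
      (hF.comp hyperplane_measurable).aemeasurable]
  refine lintegral_congr_ae ?_
  filter_upwards [Measure.ae_ne volume (0 : ℝ)] with r hr
  refine (lintegral_eq_lintegral_smul
    (hF.comp (hyperplane_measurable.comp measurable_prodMk_right)) hr).trans ?_
  simp only [Function.comp_apply, smul_simplexPoint]

lemma gammaPDFReal_of_neg {a r x : ℝ} (hx : x < 0) : gammaPDFReal a r x = 0 :=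
  if_neg hx.not_ge

lemma gammaProdPDF_eq_zero {ι : Type*} [Fintype ι] {α ρ G : ι → ℝ} (hG : ∃ j, G j < 0) :
    gammaProdPDF α ρ G = 0 :=
  let ⟨j, hj⟩ := hG
  Finset.prod_eq_zero (Finset.mem_univ j) (gammaPDFReal_of_neg hj)

variable {β : Fin (m + 1) → ℝ}

lemma dirichletDensity_eq_indicator :
    dirichletDensity m β = {x | ∀ j, 0 ≤ simplexPoint x j}.indicator
      fun x => ∏ j, simplexPoint x j ^ (β j - 1) := by
  simp only [dirichletDensity, forall_simplexPoint_nonneg_iff, Fin.prod_univ_castSucc,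
    simplexPoint_castSucc, simplexPoint_last]

lemma measurable_dirichletDensity : Measurable (dirichletDensity m β) := by
  rw [dirichletDensity_eq_indicator]
  refine Measurable.indicator (by fun_prop) ?_
  simp only [ofPred_forall]
  measurability

lemma gammaProdPDF_smul_simplexPoint {r : ℝ} (hr : 0 < r) (x : Fin m → ℝ) :
    gammaProdPDF β 1 (r • simplexPoint x) = r ^ (∑ j, β j - 1 - m) * rexp (-r) *
      (∏ j, Real.Gamma (β j))⁻¹ * dirichletDensity m β x := by
  rw [dirichletDensity_eq_indicator]
  by_cases hx : ∀ j, 0 ≤ simplexPoint x j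
  · have factor (j : Fin (m + 1)) : gammaPDFReal (β j) 1 (r * simplexPoint x j) =
        r ^ (β j - 1) * rexp (-(r * simplexPoint x j)) * (Real.Gamma (β j))⁻¹ *
          simplexPoint x j ^ (β j - 1) := by
      rw [gammaPDFReal, if_pos (mul_nonneg hr.le (hx j)), Real.mul_rpow hr.le (hx j),
        Real.one_rpow, one_mul]
      ring
    simp only [gammaProdPDF, Pi.smul_apply, smul_eq_mul, Pi.one_apply, factor]
    rw [indicator_of_mem (mem_ofPred.2 hx), Finset.prod_mul_distrib, Finset.prod_mul_distrib,
      Finset.prod_mul_distrib, ← Real.rpow_sum_of_pos hr, ← Real.exp_sum, Finset.sum_neg_distrib,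
      ← Finset.mul_sum, sum_simplexPoint, Finset.prod_inv_distrib, Finset.sum_sub_distrib]
    simp [sub_sub, add_comm]
  · obtain ⟨j, hj⟩ : ∃ j, simplexPoint x j < 0 := by simpa using hx
    rw [gammaProdPDF_eq_zero ⟨j, mul_neg_of_pos_of_neg hr hj⟩, indicator_of_notMem
      (mt mem_ofPred.1 hx), mul_zero]

lemma gammaProdPDF_smul_simplexPoint_of_neg {r : ℝ} (hr : r < 0) (x : Fin m → ℝ) :
    gammaProdPDF β 1 (r • simplexPoint x) = 0 := by
  obtain ⟨j, -, hj⟩ : ∃ j ∈ Finset.univ, 0 < simplexPoint x j :=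
    Finset.exists_lt_of_sum_lt (by simp)
  exact gammaProdPDF_eq_zero ⟨j, mul_neg_of_neg_of_pos hr hj⟩

lemma lintegral_dirichletBase {F : (Fin m → ℝ) → ℝ≥0∞} (hF : Measurable F) :
    ∫⁻ x, F x ∂dirichletBase m β = ∫⁻ x, F x * ENNReal.ofReal (dirichletDensity m β x) := by
  rw [dirichletBase, lintegral_withDensity_eq_lintegral_mul _
    measurable_dirichletDensity.ennreal_ofReal hF]
  exact lintegral_congr fun x => mul_comm _ _

@[fun_prop]
lemma measurable_gammaPDF (a r : ℝ) : Measurable (gammaPDF a r) :=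
  (measurable_gammaPDFReal a r).ennreal_ofReal

lemma ofReal_pow_mul_gammaProdPDF_smul_simplexPoint (hβ : ∀ j, 0 < β j) {r : ℝ} (hr : 0 < r)
    (x : Fin m → ℝ) :
    ENNReal.ofReal (r ^ m) * ENNReal.ofReal (gammaProdPDF β 1 (r • simplexPoint x)) =
      ENNReal.ofReal (Real.Gamma (∑ j, β j) / ∏ j, Real.Gamma (β j)) *
        gammaPDF (∑ j, β j) 1 r * ENNReal.ofReal (dirichletDensity m β x) := by
  have hΓ : 0 < ∏ j, Real.Gamma (β j) := Finset.prod_pos fun j _ => Real.Gamma_pos_of_pos (hβ j)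
  have hΓs : 0 < Real.Gamma (∑ j, β j) :=
    Real.Gamma_pos_of_pos (Finset.sum_pos (fun j _ => hβ j) Finset.univ_nonempty)
  rw [gammaPDF_of_nonneg hr.le, gammaProdPDF_smul_simplexPoint hr,
    ← ENNReal.ofReal_mul (by positivity), ← ENNReal.ofReal_mul (by positivity),
    ← ENNReal.ofReal_mul (by positivity), Real.rpow_sub hr _ (m : ℝ), Real.rpow_natCast]
  congr 1
  field_simp
  simp

lemma lintegral_mul_gammaProdPDF_eq_dirichletBase (hβ : ∀ j, 0 < β j)
    {H : (Fin (m + 1) → ℝ) → ℝ≥0∞} (hH : Measurable H)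
    (hom : ∀ r : ℝ, 0 < r → ∀ w, H (r • w) = H w) {ψ : ℝ → ℝ≥0∞} (hψ : Measurable ψ) :
    ∫⁻ G, H G * ψ (∑ j, G j) * ENNReal.ofReal (gammaProdPDF β 1 G) =
      ENNReal.ofReal (Real.Gamma (∑ j, β j) / ∏ j, Real.Gamma (β j)) *
        (∫⁻ x, H (simplexPoint x) ∂dirichletBase m β) *
          ∫⁻ r, ψ r * gammaPDF (∑ j, β j) 1 r := by
  set C := ENNReal.ofReal (Real.Gamma (∑ j, β j) / ∏ j, Real.Gamma (β j))
  have hdens := (measurable_dirichletDensity (β := β)).ennreal_ofReal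
  rw [lintegral_dirichletBase (by fun_prop), lintegral_eq_lintegral_smul_simplexPoint
    (by fun_prop), ← lintegral_const_mul _ (by fun_prop)]
  refine lintegral_congr_ae ?_
  filter_upwards [Measure.ae_ne volume (0 : ℝ)] with r hr
  rcases hr.lt_or_gt with hr | hr
  · simp [gammaProdPDF_smul_simplexPoint_of_neg hr, gammaPDF_of_neg hr]
  have integrand_eq (x : Fin m → ℝ) : ENNReal.ofReal (|r| ^ m) * (H (r • simplexPoint x) *
      ψ (∑ j, (r • simplexPoint x) j) * ENNReal.ofReal (gammaProdPDF β 1 (r • simplexPoint x))) =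
        C * (ψ r * gammaPDF (∑ j, β j) 1 r) *
          (H (simplexPoint x) * ENNReal.ofReal (dirichletDensity m β x)) := by
    rw [mul_left_comm, abs_of_pos hr, ofReal_pow_mul_gammaProdPDF_smul_simplexPoint hβ hr, hom r hr]
    simp only [Pi.smul_apply, smul_eq_mul, ← Finset.mul_sum, sum_simplexPoint, mul_one]
    ring
  rw [← lintegral_const_mul' _ _ ENNReal.ofReal_ne_top, lintegral_congr integrand_eq,
    lintegral_const_mul _ (by fun_prop)]
  ring

lemma lintegral_gammaProdPDF {ι : Type*} [Fintype ι] {α ρ : ι → ℝ} (hα : ∀ j, 0 < α j)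
    (hρ : ∀ j, 0 < ρ j) : ∫⁻ G, ENNReal.ofReal (gammaProdPDF α ρ G) = 1 := by
  rw [← ofReal_integral_eq_lintegral_ofReal (integrable_gammaProdPDF hα hρ)
    (ae_of_all _ (gammaProdPDF_nonneg hα hρ))]
  simp only [gammaProdPDF]
  rw [integral_fintype_prod_volume_eq_prod fun j => gammaPDFReal (α j) (ρ j)]
  simp [integral_gammaPDFReal (hα _) (hρ _)]

lemma dirichletBase_univ_inv (hβ : ∀ j, 0 < β j) : (dirichletBase m β univ)⁻¹ =
    ENNReal.ofReal (Real.Gamma (∑ j, β j) / ∏ j, Real.Gamma (β j)) := by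
  have hs : 0 < ∑ j, β j := Finset.sum_pos (fun j _ => hβ j) Finset.univ_nonempty
  have total := lintegral_mul_gammaProdPDF_eq_dirichletBase hβ (H := fun _ => 1) (ψ := fun _ => 1)
    measurable_const (fun _ _ _ => rfl) measurable_const
  simp only [one_mul, lintegral_gammaPDF_eq_one hs one_pos, lintegral_one, mul_one] at total
  rw [lintegral_gammaProdPDF (ρ := 1) hβ fun _ => one_pos] at total
  exact (ENNReal.eq_inv_of_mul_eq_one_left total.symm).symm

lemma dirichlet_eq_map : dirichlet m β =
    ((dirichletBase m β univ)⁻¹ • dirichletBase m β).map simplexPoint := rfl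

lemma isProbabilityMeasure_dirichlet (hβ : ∀ j, 0 < β j) :
    IsProbabilityMeasure (dirichlet m β) := by
  have hΓ : 0 < Real.Gamma (∑ j, β j) / ∏ j, Real.Gamma (β j) :=
    div_pos (Real.Gamma_pos_of_pos (Finset.sum_pos (fun j _ => hβ j) Finset.univ_nonempty))
      (Finset.prod_pos fun j _ => Real.Gamma_pos_of_pos (hβ j))
  have base_inv := dirichletBase_univ_inv hβ
  refine ⟨?_⟩
  rw [dirichlet_eq_map, Measure.map_apply measurable_simplexPoint .univ, preimage_univ,
    Measure.smul_apply, smul_eq_mul]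
  refine ENNReal.inv_mul_cancel (ENNReal.inv_ne_top.1 ?_) (ENNReal.inv_ne_zero.1 ?_)
  · exact base_inv ▸ ENNReal.ofReal_ne_top
  · exact base_inv ▸ (ENNReal.ofReal_pos.2 hΓ).ne'

/-- The normalised vector of independent gamma variables is Dirichlet distributed and independent
of their sum. -/
theorem lintegral_mul_gammaProdPDF (hβ : ∀ j, 0 < β j) {H : (Fin (m + 1) → ℝ) → ℝ≥0∞}
    (hH : Measurable H) (hom : ∀ r : ℝ, 0 < r → ∀ w, H (r • w) = H w) {ψ : ℝ → ℝ≥0∞}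
    (hψ : Measurable ψ) :
    ∫⁻ G, H G * ψ (∑ j, G j) * ENNReal.ofReal (gammaProdPDF β 1 G) =
      (∫⁻ w, H w ∂dirichlet m β) * ∫⁻ r, ψ r * gammaPDF (∑ j, β j) 1 r := by
  rw [lintegral_mul_gammaProdPDF_eq_dirichletBase hβ hH hom hψ, ← dirichletBase_univ_inv hβ,
    dirichlet_eq_map, lintegral_map hH measurable_simplexPoint, lintegral_smul_measure, smul_eq_mul]

lemma ae_sum_eq_one_dirichlet : ∀ᵐ w ∂dirichlet m β, ∑ j, w j = 1 :=
  (ae_map_iff measurable_simplexPoint.aemeasurable (by measurability)).2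
    (ae_of_all _ sum_simplexPoint)

end Dirichlet

section DirichletSlice

lemma lintegral_inv_mul_gammaPDF_add_one {a : ℝ} (ha : 0 < a) :
    ∫⁻ r : ℝ, ENNReal.ofReal r⁻¹ * gammaPDF (a + 1) 1 r = ENNReal.ofReal a⁻¹ := by
  have integrand_ae_eq : (fun r : ℝ => ENNReal.ofReal r⁻¹ * gammaPDF (a + 1) 1 r) =ᵐ[volume]
      fun r => ENNReal.ofReal a⁻¹ * gammaPDF a 1 r := by
    filter_upwards [Measure.ae_ne volume (0 : ℝ)] with r hr
    rcases hr.lt_or_gt with hr | hr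
    · simp [gammaPDF_of_neg hr]
    have : 0 < Real.Gamma a := Real.Gamma_pos_of_pos ha
    rw [gammaPDF_of_nonneg hr.le, gammaPDF_of_nonneg hr.le, Real.Gamma_add_one ha.ne',
      ← ENNReal.ofReal_mul (by positivity), ← ENNReal.ofReal_mul (by positivity),
      Real.rpow_sub_one hr.ne' a]
    congr 1
    simp only [add_sub_cancel_right, Real.one_rpow]
    field_simp
  rw [lintegral_congr_ae integrand_ae_eq, lintegral_const_mul _ (by fun_prop),
    lintegral_gammaPDF_eq_one ha one_pos, mul_one]

lemma lintegral_Ioi_eq_lintegral_div {c : ℝ} (hc : 0 < c) (F : ℝ → ℝ≥0∞) :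
    ∫⁻ s in Ioi 0, F s = ∫⁻ u in Ioi 0, ENNReal.ofReal (c / u ^ 2) * F (c / u) := by
  have div_div (u : ℝ) : c / (c / u) = u := div_div_cancel₀ hc.ne'
  have image_eq : (fun u : ℝ => c / u) '' Ioi 0 = Ioi 0 := by
    refine Subset.antisymm (image_subset_iff.2 fun u hu => div_pos hc hu) fun s hs => ?_
    exact ⟨c / s, div_pos hc hs, div_div s⟩
  have hderiv (u : ℝ) (hu : u ∈ Ioi (0 : ℝ)) :
      HasDerivWithinAt (fun u : ℝ => c / u) (-(c / u ^ 2)) (Ioi 0) u := by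
    simpa [div_eq_mul_inv] using ((hasDerivAt_inv (ne_of_gt hu)).const_mul c).hasDerivWithinAt
  have hinj : InjOn (fun u : ℝ => c / u) (Ioi 0) :=
    Function.LeftInverse.injective (g := fun u : ℝ => c / u) div_div |>.injOn
  rw [← image_eq, lintegral_image_eq_lintegral_abs_deriv_mul measurableSet_Ioi hderiv hinj,
    image_eq]
  refine setLIntegral_congr_fun measurableSet_Ioi fun u _ => ?_
  rw [abs_neg, abs_of_nonneg (by positivity)]

lemma lintegral_comp_div_add {Y : ℝ} (hY : 0 < Y) (X : ℝ) (H φ : ℝ → ℝ≥0∞) :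
    ∫⁻ g, H (Y / (g + X)) * ENNReal.ofReal (g + X)⁻¹ * φ g =
      ∫⁻ u in Ioi 0, H u * ENNReal.ofReal u⁻¹ * φ (Y / u - X) := by
  have translate := lintegral_add_right_eq_self (μ := volume)
    (fun s => H (Y / s) * ENNReal.ofReal s⁻¹ * φ (s - X)) X
  simp only [add_sub_cancel_right] at translate
  have support_subset : Function.support (fun s => H (Y / s) * ENNReal.ofReal s⁻¹ * φ (s - X)) ⊆
      Ioi 0 := fun s hs => by
    by_contra hs0
    exact hs (by simp [ENNReal.ofReal_of_nonpos (inv_nonpos.2 (not_lt.1 hs0))])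
  rw [translate, ← setLIntegral_eq_of_support_subset support_subset,
    lintegral_Ioi_eq_lintegral_div hY]
  refine setLIntegral_congr_fun measurableSet_Ioi fun u (hu : 0 < u) => ?_
  have jacobian : ENNReal.ofReal (Y / u ^ 2) * ENNReal.ofReal (Y / u)⁻¹ = ENNReal.ofReal u⁻¹ := by
    rw [← ENNReal.ofReal_mul (by positivity)]
    congr 1
    field_simp
  simp only [div_div_cancel₀ hY.ne', ← jacobian]
  ring

variable {m : ℕ}

theorem dirichlet_setOf_sum_mul_mem_eq {β : Fin (m + 1) → ℝ} (hβ : ∀ j, 0 < β j) {A : ℝ}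
    (hA : 0 < A) (hsum : ∑ j, β j = A + 1) (f : Fin (m + 1) → ℝ) {B : Set ℝ}
    (hB : MeasurableSet B) :
    dirichlet m β {w | ∑ j, f j * w j ∈ B} = ENNReal.ofReal A *
      ∫⁻ G, B.indicator 1 ((∑ j, f j * G j) / ∑ j, G j) * ENNReal.ofReal (∑ j, G j)⁻¹ *
        ENNReal.ofReal (gammaProdPDF β 1 G) := by
  have hind : Measurable (B.indicator (1 : ℝ → ℝ≥0∞)) := measurable_one.indicator hB
  have ratio_measurable : Measurable fun G : Fin (m + 1) → ℝ =>
      B.indicator (1 : ℝ → ℝ≥0∞) ((∑ j, f j * G j) / ∑ j, G j) := hind.comp (by fun_prop)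
  have ratio_smul (r : ℝ) (hr : 0 < r) (w : Fin (m + 1) → ℝ) :
      (∑ j, f j * (r • w) j) / ∑ j, (r • w) j = (∑ j, f j * w j) / ∑ j, w j := by
    simp only [Pi.smul_apply, smul_eq_mul, mul_left_comm (f _) r, ← Finset.mul_sum]
    exact mul_div_mul_left _ _ hr.ne'
  have event_eq : ∫⁻ w, B.indicator 1 ((∑ j, f j * w j) / ∑ j, w j) ∂dirichlet m β =
      dirichlet m β {w | ∑ j, f j * w j ∈ B} := by
    have hset : MeasurableSet {w : Fin (m + 1) → ℝ | ∑ j, f j * w j ∈ B} :=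
      measurableSet_preimage (by fun_prop) hB
    rw [← lintegral_indicator_one hset]
    refine lintegral_congr_ae ?_
    filter_upwards [ae_sum_eq_one_dirichlet] with w hw
    rw [hw, div_one]
    rfl
  rw [lintegral_mul_gammaProdPDF hβ ratio_measurable (fun r hr w => by rw [ratio_smul r hr])
    (ψ := fun s => ENNReal.ofReal s⁻¹) (by fun_prop), hsum, lintegral_inv_mul_gammaPDF_add_one hA,
    event_eq, mul_left_comm, ← ENNReal.ofReal_mul hA.le, mul_inv_cancel₀ hA.ne',
    ENNReal.ofReal_one, mul_one]

variable {α f : Fin (m + 1) → ℝ}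

lemma gammaProdPDF_update_cons (α : Fin (m + 1) → ℝ) (a g : ℝ) (y : Fin m → ℝ) :
    gammaProdPDF (Function.update α 0 a) 1 (Fin.cons g y : Fin (m + 1) → ℝ) =
      gammaPDFReal a 1 g * gammaProdPDF (Fin.tail α) 1 y := by
  simp [gammaProdPDF, Fin.prod_univ_succ, Fin.tail]

lemma lintegral_sum_div_sum_mul_gammaProdPDF_fiber (hf0 : f 0 = 0) (hf : ∀ j, 0 ≤ f j) {i : Fin m}
    (hi : 0 < f i.succ) (H : ℝ → ℝ≥0∞) {y : Fin m → ℝ} (hy : y i ≠ 0) :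
    ∫⁻ g : ℝ, H ((∑ j, f j * (Fin.cons g y : Fin (m + 1) → ℝ) j) /
          ∑ j, (Fin.cons g y : Fin (m + 1) → ℝ) j) *
        ENNReal.ofReal (∑ j, (Fin.cons g y : Fin (m + 1) → ℝ) j)⁻¹ *
        ENNReal.ofReal (gammaProdPDF (Function.update α 0 (α 0 + 1)) 1
          (Fin.cons g y : Fin (m + 1) → ℝ)) =
      ∫⁻ u in Ioi 0, H u * ENNReal.ofReal u⁻¹ * ENNReal.ofReal (gammaProdPDF (Fin.tail α) 1 y *
        gammaPDFReal (α 0 + 1) 1 (∑ j, (Fin.tail f j / u - 1) * y j)) := by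
  simp only [gammaProdPDF_update_cons, Fin.sum_univ_succ, Fin.cons_zero,
    Fin.cons_succ, hf0, zero_mul, zero_add]
  by_cases hneg : ∃ j, y j < 0
  · simp [gammaProdPDF_eq_zero hneg]
  have hy0 (j : Fin m) : 0 ≤ y j := not_lt.1 fun hj => hneg ⟨j, hj⟩
  have hY : 0 < ∑ j : Fin m, f j.succ * y j :=
    Finset.sum_pos' (fun j _ => mul_nonneg (hf _) (hy0 j))
      ⟨i, Finset.mem_univ i, mul_pos hi ((hy0 i).lt_of_ne' hy)⟩
  have slope_eq (u : ℝ) : (∑ j, (Fin.tail f j / u - 1) * y j) =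
      (∑ j : Fin m, f j.succ * y j) / u - ∑ j, y j := by
    simp only [sub_mul, one_mul, Finset.sum_sub_distrib, Finset.sum_div, div_mul_eq_mul_div,
      Fin.tail]
  simp only [slope_eq, mul_comm (gammaProdPDF _ _ y)]
  exact lintegral_comp_div_add hY (∑ j, y j) H fun g =>
    ENNReal.ofReal (gammaPDFReal (α 0 + 1) 1 g * gammaProdPDF (Fin.tail α) 1 y)

lemma lintegral_gammaProdPDF_mul_gammaPDFReal (hα : ∀ j, 0 < α j) (c : Fin m → ℝ) :
    ∫⁻ y, ENNReal.ofReal (gammaProdPDF (Fin.tail α) 1 y *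
      gammaPDFReal (α 0 + 1) 1 (∑ j, c j * y j)) = ENNReal.ofReal (gammaSlice α c) := by
  have hα' (j : Fin m) : 0 < Fin.tail α j := hα j.succ
  have hα0 := hα 0
  refine (ofReal_integral_eq_lintegral_ofReal
    (integrable_gammaProdPDF_mul_gammaPDFReal hα' (fun _ => one_pos) (by linarith) one_pos)
    (ae_of_all _ fun y => ?_)).symm
  refine mul_nonneg (gammaProdPDF_nonneg hα' (fun _ => one_pos) y) ?_
  exact gammaPDFReal_nonneg (by linarith) one_pos _

theorem dirichlet_update_setOf_sum_mul_mem_eq (hα : ∀ j, 0 < α j) (hf0 : f 0 = 0)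
    (hf : ∀ j, 0 ≤ f j) {i : Fin m} (hi : 0 < f i.succ) {B : Set ℝ} (hB : MeasurableSet B) :
    dirichlet m (Function.update α 0 (α 0 + 1)) {w | ∑ j, f j * w j ∈ B} =
      ENNReal.ofReal (∑ j, α j) * ∫⁻ u in B ∩ Ioi 0,
        ENNReal.ofReal (u⁻¹ * gammaSlice α (fun j => Fin.tail f j / u - 1)) := by
  have hβ (j : Fin (m + 1)) : 0 < Function.update α 0 (α 0 + 1) j := by
    rcases eq_or_ne j 0 with rfl | hj
    · simpa using (hα 0).trans (lt_add_one _)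
    · simpa [hj] using hα j
  have hsum : ∑ j, Function.update α 0 (α 0 + 1) j = ∑ j, α j + 1 := by
    simp [Fin.sum_univ_succ, add_right_comm]
  have : Measurable (B.indicator (1 : ℝ → ℝ≥0∞)) := measurable_one.indicator hB
  have ae_ne : ∀ᵐ y : Fin m → ℝ, y i ≠ 0 :=
    Measure.ae_eval_ne (μ := fun _ : Fin m => (volume : Measure ℝ)) i 0
  have fiber_ae := ae_ne.mono fun y hy =>
    lintegral_sum_div_sum_mul_gammaProdPDF_fiber (α := α) hf0 hf hi (B.indicator 1) hy
  rw [dirichlet_setOf_sum_mul_mem_eq hβ (Finset.sum_pos (fun j _ => hα j) Finset.univ_nonempty)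
    hsum f hB, lintegral_insertNth 0 (by fun_prop)]
  simp only [Fin.insertNth_zero']
  rw [lintegral_congr_ae fiber_ae, lintegral_lintegral_swap (by fun_prop),
    ← Measure.restrict_restrict hB, ← lintegral_indicator hB]
  congr 1
  refine setLIntegral_congr_fun measurableSet_Ioi fun u (hu : 0 < u) => ?_
  simp only [mul_assoc]
  rw [lintegral_const_mul' _ _ (by by_cases hu : u ∈ B <;> simp [hu]),
    lintegral_const_mul' _ _ ENNReal.ofReal_ne_top, lintegral_gammaProdPDF_mul_gammaPDFReal hα,
    ← ENNReal.ofReal_mul (inv_nonneg.2 hu.le)]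
  by_cases huB : u ∈ B <;> simp [huB]

end DirichletSlice

section SaddlePointDensity

variable {m : ℕ} {A b ε κ : ℝ} {p f : Fin (m + 1) → ℝ}

lemma gammaPDFReal_of_nonpos {a r x : ℝ} (ha : 1 < a) (hx : x ≤ 0) : gammaPDFReal a r x = 0 := by
  rcases hx.eq_or_lt with rfl | hx
  · simp [gammaPDFReal, Real.zero_rpow (sub_ne_zero.2 ha.ne')]
  · exact gammaPDFReal_of_neg hx

lemma gammaSlice_eq_zero {α : Fin (m + 1) → ℝ} (hα : 0 < α 0) {c : Fin m → ℝ}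
    (hc : ∀ j, c j ≤ 0) : gammaSlice α c = 0 := by
  refine integral_eq_zero_of_ae (ae_of_all _ fun y => ?_)
  by_cases hy : ∃ j, y j < 0
  · simp [gammaProdPDF_eq_zero hy]
  · have sum_nonpos : ∑ j, c j * y j ≤ 0 := Finset.sum_nonpos fun j _ =>
      mul_nonpos_of_nonpos_of_nonneg (hc j) (not_lt.1 fun hj => hy ⟨j, hj⟩)
    simp [gammaPDFReal_of_nonpos (lt_add_of_pos_left 1 hα) sum_nonpos]

/-- The saddle-point approximation, in the coordinate `κ` with `w f = tiltMean p f κ`, of the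
density of `w f` under the Dirichlet law. -/
def saddleDensity (A : ℝ) (p f : Fin (m + 1) → ℝ) (κ : ℝ) : ℝ :=
  √(A * scoreVar p f κ) / tiltMass p f κ * (rexp (-(A * tiltKL p f κ)) / √(2 * π))

lemma setLIntegral_gammaSlice_eq {α : Fin (m + 1) → ℝ} (hα : 0 < α 0) (hf : ∀ j, f j ≤ b)
    {B : Set ℝ} (hB : MeasurableSet B) :
    ∫⁻ u in B ∩ Ioi 0, ENNReal.ofReal (u⁻¹ * gammaSlice α (fun j => Fin.tail f j / u - 1)) =
      ∫⁻ u in Ioo 0 b ∩ B, ENNReal.ofReal (u⁻¹ * gammaSlice α (fun j => Fin.tail f j / u - 1)) := by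
  rw [← lintegral_indicator (hB.inter measurableSet_Ioi),
    ← lintegral_indicator (measurableSet_Ioo.inter hB)]
  refine lintegral_congr fun u => ?_
  by_cases hu : u ∈ Ioo 0 b ∩ B
  · rw [indicator_of_mem hu, indicator_of_mem (mem_inter hu.2 (mem_Ioi.2 hu.1.1))]
  rw [indicator_of_notMem hu]
  refine indicator_apply_eq_zero.2 fun hu' => ?_
  have hbu : b ≤ u := not_lt.1 fun hub => hu ⟨⟨hu'.2, hub⟩, hu'.1⟩
  have slice_eq_zero : gammaSlice α (fun j => Fin.tail f j / u - 1) = 0 :=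
    gammaSlice_eq_zero hα fun j => sub_nonpos.2 ((div_le_one hu'.2).2 ((hf _).trans hbu))
  rw [slice_eq_zero, mul_zero, ENNReal.ofReal_zero]

lemma IsReward.mul_deriv_mul_gammaSlice_eq (h : IsReward p f b) (hA : 0 < A) (hf0 : f 0 = 0)
    (hκ : κ < b⁻¹) :
    A * (scoreVar p f κ / tiltMass p f κ ^ 2 * ((tiltMean p f κ)⁻¹ *
        gammaSlice (A • p) (fun j => Fin.tail f j / tiltMean p f κ - 1))) =
      saddleDensity A p f κ * saddleRatio A p f κ := by
  have hM := h.tiltMass_pos hκ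
  have hN := h.scoreMean_pos hκ
  have hAV := mul_pos hA (h.scoreVar_pos hκ)
  have : 0 < √(A * scoreVar p f κ) := Real.sqrt_pos.2 hAV
  rw [h.gammaSlice_eq hA hf0 hκ, saddleDensity, tiltMean]
  field_simp
  rw [Real.sq_sqrt hAV.le]

lemma measurable_tiltMean (p f : Fin (m + 1) → ℝ) : Measurable (tiltMean p f) := by
  unfold tiltMean scoreMean tiltMass tiltScore
  fun_prop

theorem IsReward.dirichlet_setOf_sum_mul_mem_eq (h : IsReward p f b) (hA : 0 < A)
    (hf0 : f 0 = 0) {B : Set ℝ} (hB : MeasurableSet B) :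
    dirichlet m (Function.update (A • p) 0 ((A • p) 0 + 1)) {w | ∑ j, f j * w j ∈ B} =
      ∫⁻ κ in Iio b⁻¹ ∩ tiltMean p f ⁻¹' B,
        ENNReal.ofReal (saddleDensity A p f κ * saddleRatio A p f κ) := by
  have hα (j : Fin (m + 1)) : 0 < (A • p) j := mul_pos hA (h.pos j)
  have sum_eq : ∑ j, (A • p) j = A := by simp [← Finset.mul_sum, h.sum_eq_one]
  obtain ⟨i, hi⟩ : ∃ i : Fin m, f i.succ = b := by
    obtain ⟨i, hi⟩ := h.exists_eq_bound
    obtain ⟨k, rfl⟩ := Fin.exists_succ_eq.2 fun hi0 : i = 0 =>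
      h.bound_pos.ne (by rw [← hi, hi0, hf0])
    exact ⟨k, hi⟩
  rw [dirichlet_update_setOf_sum_mul_mem_eq hα hf0 (fun j => (h.mem_Icc j).1)
    (hi ▸ h.bound_pos) hB, sum_eq, setLIntegral_gammaSlice_eq (hα 0) (fun j => (h.mem_Icc j).2) hB,
    ← h.image_tiltMean, ← image_inter_preimage]
  have hS : MeasurableSet (Iio b⁻¹ ∩ tiltMean p f ⁻¹' B) :=
    measurableSet_Iio.inter (measurable_tiltMean p f hB)
  rw [lintegral_image_eq_lintegral_abs_deriv_mul hS
      (fun κ hκ => (h.hasDerivAt_tiltMean hκ.1).hasDerivWithinAt)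
      (h.strictMonoOn_tiltMean.injOn.mono inter_subset_left),
    ← lintegral_const_mul' _ _ ENNReal.ofReal_ne_top]
  refine setLIntegral_congr_fun hS fun κ hκ => ?_
  have hV := h.scoreVar_pos hκ.1
  rw [abs_of_nonneg (by positivity), ← ENNReal.ofReal_mul (by positivity),
    ← ENNReal.ofReal_mul hA.le, h.mul_deriv_mul_gammaSlice_eq hA hf0 hκ.1]

lemma IsReward.abs_tiltScore_sub_scoreMean_le (h : IsReward p f b) (hA : 0 ≤ A) (κ : ℝ) {δ : ℝ}
    (hδ : 0 < δ) {i : Fin (m + 1)} (hi : 1 / δ ^ 2 ≤ A * p i) :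
    |tiltScore f κ i - scoreMean p f κ| ≤ δ * √(A * scoreVar p f κ) := by
  have term_le : p i * (tiltScore f κ i - scoreMean p f κ) ^ 2 ≤ scoreVar p f κ :=
    Finset.single_le_sum (f := fun j => p j * (tiltScore f κ j - scoreMean p f κ) ^ 2)
      (fun j _ => mul_nonneg (h.pos j).le (sq_nonneg _)) (Finset.mem_univ i)
  have sq_le : (tiltScore f κ i - scoreMean p f κ) ^ 2 ≤ δ ^ 2 * (A * scoreVar p f κ) :=
    calc (tiltScore f κ i - scoreMean p f κ) ^ 2
        = δ ^ 2 * (1 / δ ^ 2 * (tiltScore f κ i - scoreMean p f κ) ^ 2) := by field_simp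
      _ ≤ δ ^ 2 * (A * p i * (tiltScore f κ i - scoreMean p f κ) ^ 2) := by gcongr
      _ ≤ δ ^ 2 * (A * scoreVar p f κ) := by rw [mul_assoc A]; gcongr
  rw [← Real.sqrt_sq hδ.le, ← Real.sqrt_mul (sq_nonneg δ)]
  exact Real.abs_le_sqrt sq_le

lemma IsReward.abs_normalizedScore_le (h : IsReward p f b) (hA : 0 < A) (hκ : κ < b⁻¹) {δ : ℝ}
    (hδ : 0 < δ) {i₀ i₁ : Fin (m + 1)} (hf₀ : f i₀ = 0) (hf₁ : f i₁ = b)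
    (h₀ : 1 / δ ^ 2 ≤ A * p i₀) (h₁ : 1 / δ ^ 2 ≤ A * p i₁) (j : Fin (m + 1)) :
    |normalizedScore A p f κ j| ≤ δ := by
  have hS : 0 < √(A * scoreVar p f κ) := Real.sqrt_pos.2 (mul_pos hA (h.scoreVar_pos hκ))
  have lower := (abs_le.1 (h.abs_tiltScore_sub_scoreMean_le hA.le κ hδ h₀)).1
  have upper := (abs_le.1 (h.abs_tiltScore_sub_scoreMean_le hA.le κ hδ h₁)).2
  rw [tiltScore, hf₀, zero_div] at lower
  rw [tiltScore, hf₁] at upper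
  rw [normalizedScore, abs_div, abs_of_pos hS, div_le_iff₀ hS, abs_le]
  constructor
  · linarith [h.tiltScore_nonneg hκ j]
  · linarith [h.tiltScore_le hκ j]

lemma IsReward.sum_mul_normalizedScore (h : IsReward p f b) (A κ : ℝ) :
    ∑ j, (A • p) j * normalizedScore A p f κ j = 0 := by
  simp only [normalizedScore, Pi.smul_apply, smul_eq_mul, mul_div_assoc', ← Finset.sum_div,
    mul_assoc, ← Finset.mul_sum, mul_sub, Finset.sum_sub_distrib, ← Finset.sum_mul, h.sum_eq_one,
    one_mul]
  rw [← scoreMean, ← mul_sub, sub_self, mul_zero, zero_div]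

lemma IsReward.sum_mul_normalizedScore_sq (h : IsReward p f b) (hA : 0 < A) (hκ : κ < b⁻¹) :
    ∑ j, (A • p) j * normalizedScore A p f κ j ^ 2 = 1 := by
  have hAV := mul_pos hA (h.scoreVar_pos hκ)
  simp only [normalizedScore, Pi.smul_apply, smul_eq_mul, div_pow, mul_div_assoc',
    ← Finset.sum_div, mul_assoc, ← Finset.mul_sum, Real.sq_sqrt hAV.le]
  exact div_self hAV.ne'

theorem IsReward.abs_saddleRatio_sub_one_le (h : IsReward p f b) (hA : 0 < A) (hκ : κ < b⁻¹)
    (hε : ε ∈ Ioo 0 1) {i₀ i₁ : Fin (m + 1)} (hf₀ : f i₀ = 0) (hf₁ : f i₁ = b)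
    (h₀ : 256 / ε ^ 2 ≤ A * p i₀) (h₁ : 256 / ε ^ 2 ≤ A * p i₁) :
    |saddleRatio A p f κ - 1| ≤ ε := by
  obtain ⟨hε0, hε1⟩ := hε
  have const_eq : 1 / (ε / 16) ^ 2 = 256 / ε ^ 2 := by ring
  have score_le := h.abs_normalizedScore_le hA hκ (by positivity : 0 < ε / 16) hf₀ hf₁
    (const_eq.trans_le h₀) (const_eq.trans_le h₁)
  have re_le := (Complex.abs_re_le_norm _).trans <|
    norm_saddleIntegral_sub_sqrt_two_pi_le (α := A • p) (fun j => (mul_pos hA (h.pos j)).le)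
      (h.sum_mul_normalizedScore A κ) (h.sum_mul_normalizedScore_sq hA hκ) (by nlinarith)
      score_le (score_le 0)
  rw [Complex.sub_re, Complex.ofReal_re] at re_le
  have hpi : 0 < √(2 * π) := by positivity
  have three_pi_le : 3 / 4 * π ≤ √(2 * π) :=
    Real.le_sqrt_of_sq_le (by nlinarith [Real.pi_pos, Real.pi_lt_d2])
  rw [saddleRatio, div_sub_one hpi.ne', abs_div, abs_of_pos hpi, div_le_iff₀ hpi]
  nlinarith

end SaddlePointDensity

section SignedRoot

variable {m : ℕ} {A b κ : ℝ} {p f : Fin (m + 1) → ℝ}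

/-- The signed likelihood root `A(p, u, f)` at the mean `u = tiltMean p f κ`, as a function of the
tilting parameter. -/
def signedRoot (p f : Fin (m + 1) → ℝ) (κ : ℝ) : ℝ := Real.sign κ * √(2 * tiltKL p f κ)

lemma signedRoot_of_nonneg (hp : ∑ j, p j = 1) (hκ : 0 ≤ κ) :
    signedRoot p f κ = √(2 * tiltKL p f κ) := by
  rcases hκ.eq_or_lt with rfl | hκ
  · simp [signedRoot, tiltKL_zero hp]
  · rw [signedRoot, Real.sign_of_pos hκ, one_mul]

lemma signedRoot_of_nonpos (hp : ∑ j, p j = 1) (hκ : κ ≤ 0) :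
    signedRoot p f κ = -√(2 * tiltKL p f κ) := by
  rcases hκ.eq_or_lt with rfl | hκ
  · simp [signedRoot, tiltKL_zero hp]
  · rw [signedRoot, Real.sign_of_neg hκ, neg_one_mul]

namespace IsReward

lemma two_mul_tiltKL_nonneg (h : IsReward p f b) (hκ : κ < b⁻¹) : 0 ≤ 2 * tiltKL p f κ := by
  rcases eq_or_ne κ 0 with rfl | hκ0
  · simp [tiltKL_zero h.sum_eq_one]
  · linarith [h.tiltKL_pos hκ hκ0]

lemma signedRoot_sq (h : IsReward p f b) (hκ : κ < b⁻¹) :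
    signedRoot p f κ ^ 2 = 2 * tiltKL p f κ := by
  rcases le_total 0 κ with h0 | h0
  · rw [signedRoot_of_nonneg h.sum_eq_one h0, Real.sq_sqrt (h.two_mul_tiltKL_nonneg hκ)]
  · rw [signedRoot_of_nonpos h.sum_eq_one h0, neg_sq, Real.sq_sqrt (h.two_mul_tiltKL_nonneg hκ)]

lemma strictMonoOn_signedRoot (h : IsReward p f b) : StrictMonoOn (signedRoot p f) (Iio b⁻¹) := by
  rw [← Iic_union_Ico_eq_Iio h.inv_pos]
  refine StrictMonoOn.union (c := 0) (fun x hx y hy hxy => ?_) (fun x hx y hy hxy => ?_)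
    isGreatest_Iic (isLeast_Ico h.inv_pos)
  · rw [signedRoot_of_nonpos h.sum_eq_one hx, signedRoot_of_nonpos h.sum_eq_one hy, neg_lt_neg_iff]
    have := h.strictAntiOn_tiltKL hx hy hxy
    exact Real.sqrt_lt_sqrt (h.two_mul_tiltKL_nonneg (lt_of_le_of_lt hy h.inv_pos)) (by linarith)
  · rw [signedRoot_of_nonneg h.sum_eq_one hx.1, signedRoot_of_nonneg h.sum_eq_one hy.1]
    have := h.strictMonoOn_tiltKL hx hy hxy
    exact Real.sqrt_lt_sqrt (h.two_mul_tiltKL_nonneg hx.2) (by linarith)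

lemma hasDerivAt_signedRoot (h : IsReward p f b) (hκ : κ < b⁻¹) (hκ0 : κ ≠ 0) :
    HasDerivAt (signedRoot p f)
      (|κ| * scoreVar p f κ / (tiltMass p f κ * √(2 * tiltKL p f κ))) κ := by
  have hK := h.tiltKL_pos hκ hκ0
  have hM := h.tiltMass_pos hκ
  have sqrt_deriv := ((h.hasDerivAt_tiltKL hκ).const_mul 2).sqrt (by positivity)
  rcases hκ0.lt_or_gt with h0 | h0
  · have eventually_eq : signedRoot p f =ᶠ[nhds κ] fun x => -√(2 * tiltKL p f x) :=
      (eventually_lt_nhds h0).mono fun x hx => signedRoot_of_nonpos h.sum_eq_one hx.le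
    refine (sqrt_deriv.neg.congr_of_eventuallyEq eventually_eq).congr_deriv ?_
    rw [abs_of_neg h0]
    field_simp
  · have eventually_eq : signedRoot p f =ᶠ[nhds κ] fun x => √(2 * tiltKL p f x) :=
      (eventually_gt_nhds h0).mono fun x hx => signedRoot_of_nonneg h.sum_eq_one hx.le
    refine (sqrt_deriv.congr_of_eventuallyEq eventually_eq).congr_deriv ?_
    rw [abs_of_pos h0]
    field_simp

lemma tendsto_signedRoot_atBot (h : IsReward p f b) :
    Filter.Tendsto (signedRoot p f) Filter.atBot Filter.atBot := by
  refine (Filter.tendsto_neg_atTop_atBot.comp <| Real.tendsto_sqrt_atTop.comp <|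
    h.tendsto_tiltKL_atBot.const_mul_atTop two_pos).congr' ?_
  filter_upwards [Filter.eventually_le_atBot 0] with κ hκ
  exact (signedRoot_of_nonpos h.sum_eq_one hκ).symm

lemma Iio_subset_image_signedRoot (h : IsReward p f b) (hκ : κ < 0) :
    Iio (signedRoot p f κ) ⊆ signedRoot p f '' Iio κ := by
  intro x (hx : x < signedRoot p f κ)
  obtain ⟨κ₁, hκ₁x, hκ₁⟩ := ((h.tendsto_signedRoot_atBot.eventually_le_atBot x).and
    (Filter.eventually_le_atBot κ)).exists
  have continuousOn : ContinuousOn (signedRoot p f) (Icc κ₁ κ) := fun y hy =>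
    (h.hasDerivAt_signedRoot ((hy.2.trans_lt hκ).trans h.inv_pos)
      (hy.2.trans_lt hκ).ne).continuousAt.continuousWithinAt
  obtain ⟨y, hy, rfl⟩ := intermediate_value_Icc hκ₁ continuousOn ⟨hκ₁x, hx.le⟩
  exact ⟨y, hy.2.lt_of_ne (ne_of_apply_ne _ hx.ne), rfl⟩

end IsReward

end SignedRoot

section GaussianComparison

variable {m : ℕ} {A C b κ κ₀ : ℝ} {p f : Fin (m + 1) → ℝ}

/-- The standard Gaussian density pulled back along `κ ↦ √A * signedRoot p f κ`, to be compared with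
`saddleDensity`. -/
def rootDensity (A : ℝ) (p f : Fin (m + 1) → ℝ) (κ : ℝ) : ℝ :=
  √A * (|κ| * scoreVar p f κ / (tiltMass p f κ * √(2 * tiltKL p f κ))) *
    gaussianPDFReal 0 1 (√A * signedRoot p f κ)

namespace IsReward

lemma gaussianPDFReal_sqrt_mul_signedRoot (h : IsReward p f b) (hA : 0 ≤ A) (hκ : κ < b⁻¹) :
    gaussianPDFReal 0 1 (√A * signedRoot p f κ) = rexp (-(A * tiltKL p f κ)) / √(2 * π) := by
  rw [gaussianPDFReal, sub_zero, mul_pow, Real.sq_sqrt hA, h.signedRoot_sq hκ,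
    NNReal.coe_one, mul_one, mul_one, inv_mul_eq_div]
  congr 2
  ring

lemma saddleDensity_nonneg (h : IsReward p f b) (hκ : κ < b⁻¹) : 0 ≤ saddleDensity A p f κ := by
  have := h.tiltMass_pos hκ
  unfold saddleDensity
  positivity

lemma rootDensity_eq (h : IsReward p f b) (hA : 0 ≤ A) (hκ : κ < b⁻¹) :
    rootDensity A p f κ =
      saddleDensity A p f κ * (|κ| * √(scoreVar p f κ) / √(2 * tiltKL p f κ)) := by
  have hV := h.scoreVar_pos hκ
  rw [rootDensity, saddleDensity, h.gaussianPDFReal_sqrt_mul_signedRoot hA hκ, Real.sqrt_mul hA]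
  nth_rw 1 [← Real.mul_self_sqrt hV.le]
  ring

lemma saddleDensity_le_rootDensity (h : IsReward p f b) (hA : 0 ≤ A) (hκ : κ < b⁻¹)
    (hκ0 : 0 < κ) : saddleDensity A p f κ ≤ rootDensity A p f κ := by
  have hK := h.tiltKL_pos hκ hκ0.ne'
  rw [h.rootDensity_eq hA hκ]
  refine le_mul_of_one_le_right (h.saddleDensity_nonneg hκ) ?_
  rw [one_le_div (by positivity), ← Real.sqrt_sq_eq_abs, ← Real.sqrt_mul (sq_nonneg κ)]
  exact Real.sqrt_le_sqrt (h.two_mul_tiltKL_le hκ0.le hκ)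

lemma rootDensity_le_saddleDensity (h : IsReward p f b) (hA : 0 ≤ A) (hκ0 : κ < 0) :
    rootDensity A p f κ ≤ saddleDensity A p f κ := by
  have hκ := hκ0.trans h.inv_pos
  have hK := h.tiltKL_pos hκ hκ0.ne
  rw [h.rootDensity_eq hA hκ]
  refine mul_le_of_le_one_right (h.saddleDensity_nonneg hκ) ?_
  rw [div_le_one (by positivity), ← Real.sqrt_sq_eq_abs, ← Real.sqrt_mul (sq_nonneg κ)]
  exact Real.sqrt_le_sqrt (h.le_two_mul_tiltKL hκ0.le)

lemma gaussianReal_image_sqrt_mul_signedRoot (h : IsReward p f b) (hA : 0 < A) {S : Set ℝ}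
    (hS : MeasurableSet S) (hSb : S ⊆ Iio b⁻¹) (hS0 : 0 ∉ S) :
    gaussianReal 0 1 ((fun κ => √A * signedRoot p f κ) '' S) =
      ∫⁻ κ in S, ENNReal.ofReal (rootDensity A p f κ) := by
  have hasDerivWithinAt (κ : ℝ) (hκ : κ ∈ S) :
      HasDerivWithinAt (fun κ => √A * signedRoot p f κ)
        (√A * (|κ| * scoreVar p f κ / (tiltMass p f κ * √(2 * tiltKL p f κ)))) S κ :=
    ((h.hasDerivAt_signedRoot (hSb hκ) (ne_of_mem_of_not_mem hκ hS0)).const_mul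
      √A).hasDerivWithinAt
  have injOn : InjOn (fun κ => √A * signedRoot p f κ) S :=
    (((strictMono_mul_left_of_pos (Real.sqrt_pos.2 hA)).comp_strictMonoOn
      h.strictMonoOn_signedRoot).mono hSb).injOn
  rw [gaussianReal_apply 0 one_ne_zero,
    lintegral_image_eq_lintegral_abs_deriv_mul hS hasDerivWithinAt injOn]
  refine setLIntegral_congr_fun hS fun κ hκ => ?_
  have hM := h.tiltMass_pos (hSb hκ)
  have hV := h.scoreVar_pos (hSb hκ)
  rw [gaussianPDF, abs_of_nonneg (by positivity), ← ENNReal.ofReal_mul (by positivity),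
    rootDensity]

theorem dirichlet_setOf_tiltMean_le_le (h : IsReward p f b) (hA : 0 < A) (hf0 : f 0 = 0)
    (hκ₀ : 0 ≤ κ₀) (hκ₀b : κ₀ < b⁻¹) (hratio : ∀ κ ∈ Ioo κ₀ b⁻¹, saddleRatio A p f κ ≤ C) :
    dirichlet m (Function.update (A • p) 0 ((A • p) 0 + 1)) {w | tiltMean p f κ₀ ≤ ∑ j, f j * w j} ≤
      ENNReal.ofReal C * gaussianReal 0 1 (Ici (√A * signedRoot p f κ₀)) := by
  have preimage_eq : Iio b⁻¹ ∩ tiltMean p f ⁻¹' Ici (tiltMean p f κ₀) = Ico κ₀ b⁻¹ := by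
    ext κ
    constructor
    · exact fun hκ => ⟨(h.strictMonoOn_tiltMean.le_iff_le hκ₀b hκ.1).1 hκ.2, hκ.1⟩
    · exact fun hκ => ⟨hκ.2, (h.strictMonoOn_tiltMean.le_iff_le hκ₀b hκ.2).2 hκ.1⟩
  have image_subset : (fun κ => √A * signedRoot p f κ) '' Ioo κ₀ b⁻¹ ⊆
      Ici (√A * signedRoot p f κ₀) := by
    rintro _ ⟨κ, hκ, rfl⟩
    exact mul_le_mul_of_nonneg_left (h.strictMonoOn_signedRoot hκ₀b hκ.2 hκ.1).le (sqrt_nonneg A)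
  calc dirichlet m (Function.update (A • p) 0 ((A • p) 0 + 1))
        {w | ∑ j, f j * w j ∈ Ici (tiltMean p f κ₀)}
      = ∫⁻ κ in Ioo κ₀ b⁻¹, ENNReal.ofReal (saddleDensity A p f κ * saddleRatio A p f κ) := by
        rw [h.dirichlet_setOf_sum_mul_mem_eq hA hf0 measurableSet_Ici, preimage_eq,
          restrict_Ioo_eq_restrict_Ico]
    _ ≤ ∫⁻ κ in Ioo κ₀ b⁻¹, ENNReal.ofReal C * ENNReal.ofReal (rootDensity A p f κ) := by
        refine setLIntegral_mono' measurableSet_Ioo fun κ hκ => ?_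
        have saddle_nonneg := h.saddleDensity_nonneg (A := A) hκ.2
        have saddle_le := h.saddleDensity_le_rootDensity hA.le hκ.2 (hκ₀.trans_lt hκ.1)
        rw [ENNReal.ofReal_mul saddle_nonneg, mul_comm]
        gcongr
        exact hratio κ hκ
    _ = ENNReal.ofReal C * gaussianReal 0 1 ((fun κ => √A * signedRoot p f κ) '' Ioo κ₀ b⁻¹) := by
        rw [lintegral_const_mul' _ _ ENNReal.ofReal_ne_top,
          h.gaussianReal_image_sqrt_mul_signedRoot hA measurableSet_Ioo Ioo_subset_Iio_self
            fun h0 => hκ₀.not_gt h0.1]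
    _ ≤ ENNReal.ofReal C * gaussianReal 0 1 (Ici (√A * signedRoot p f κ₀)) := by gcongr

theorem le_dirichlet_setOf_lt_tiltMean (h : IsReward p f b) (hA : 0 < A) (hf0 : f 0 = 0)
    (hκ₀ : κ₀ < 0) (hratio : ∀ κ < κ₀, C ≤ saddleRatio A p f κ) :
    ENNReal.ofReal C * gaussianReal 0 1 (Iio (√A * signedRoot p f κ₀)) ≤
      dirichlet m (Function.update (A • p) 0 ((A • p) 0 + 1))
        {w | ∑ j, f j * w j < tiltMean p f κ₀} := by
  have hκ₀b : κ₀ < b⁻¹ := hκ₀.trans h.inv_pos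
  have preimage_eq : Iio b⁻¹ ∩ tiltMean p f ⁻¹' Iio (tiltMean p f κ₀) = Iio κ₀ := by
    ext κ
    constructor
    · exact fun hκ => (h.strictMonoOn_tiltMean.lt_iff_lt hκ.1 hκ₀b).1 hκ.2
    · exact fun hκ => ⟨hκ.trans hκ₀b, h.strictMonoOn_tiltMean (hκ.trans hκ₀b) hκ₀b hκ⟩
  have subset_image : Iio (√A * signedRoot p f κ₀) ⊆
      (fun κ => √A * signedRoot p f κ) '' Iio κ₀ := by
    intro x (hx : x < √A * signedRoot p f κ₀)
    have sqrt_pos := Real.sqrt_pos.2 hA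
    obtain ⟨κ, hκ, hκx⟩ := h.Iio_subset_image_signedRoot hκ₀
      (show x / √A < signedRoot p f κ₀ from (div_lt_iff₀' sqrt_pos).2 hx)
    exact ⟨κ, hκ, by dsimp only; rw [hκx, mul_div_cancel₀ x sqrt_pos.ne']⟩
  calc ENNReal.ofReal C * gaussianReal 0 1 (Iio (√A * signedRoot p f κ₀))
      ≤ ENNReal.ofReal C * gaussianReal 0 1 ((fun κ => √A * signedRoot p f κ) '' Iio κ₀) := by
        gcongr
    _ = ∫⁻ κ in Iio κ₀, ENNReal.ofReal C * ENNReal.ofReal (rootDensity A p f κ) := by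
        rw [lintegral_const_mul' _ _ ENNReal.ofReal_ne_top,
          h.gaussianReal_image_sqrt_mul_signedRoot hA measurableSet_Iio
            (Iio_subset_Iio hκ₀b.le) hκ₀.not_gt]
    _ ≤ ∫⁻ κ in Iio κ₀, ENNReal.ofReal (saddleDensity A p f κ * saddleRatio A p f κ) := by
        refine setLIntegral_mono' measurableSet_Iio fun κ (hκ : κ < κ₀) => ?_
        have saddle_nonneg := h.saddleDensity_nonneg (A := A) (hκ.trans hκ₀b)
        have le_saddle := h.rootDensity_le_saddleDensity hA.le (hκ.trans hκ₀)
        rw [ENNReal.ofReal_mul saddle_nonneg, mul_comm]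
        gcongr
        exact hratio κ hκ
    _ = dirichlet m (Function.update (A • p) 0 ((A • p) 0 + 1))
          {w | ∑ j, f j * w j ∈ Iio (tiltMean p f κ₀)} := by
        rw [h.dirichlet_setOf_sum_mul_mem_eq hA hf0 measurableSet_Iio, preimage_eq]

end IsReward

lemma gaussianReal_Iio_le_Ici {x : ℝ} (hx : x ≤ 0) :
    gaussianReal 0 1 (Iio x) ≤ gaussianReal 0 1 (Ici x) :=
  calc gaussianReal 0 1 (Iio x) = (gaussianReal 0 1).map (-·) (Iio x) := by
        rw [gaussianReal_map_neg, neg_zero]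
    _ = gaussianReal 0 1 (Ioi (-x)) := by
        rw [Measure.map_apply measurable_neg measurableSet_Iio]
        congr 1
        ext y
        simp
    _ ≤ gaussianReal 0 1 (Ici x) :=
        measure_mono <| Ioi_subset_Ici_self.trans <| Ici_subset_Ici.2 (by linarith)

lemma measureReal_le_one_add_mul_of_compl_le {Ω Ω' : Type*} [MeasurableSpace Ω]
    [MeasurableSpace Ω'] {P : Measure Ω} {Q : Measure Ω'} [IsProbabilityMeasure P]
    [IsProbabilityMeasure Q] {E : Set Ω} {F : Set Ω'} (hE : MeasurableSet E) (hF : MeasurableSet F)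
    {ε : ℝ} (hε : ε ∈ Icc 0 1) (hF_le : Q Fᶜ ≤ Q F)
    (h_compl : ENNReal.ofReal (1 - ε) * Q Fᶜ ≤ P Eᶜ) :
    P E ≤ ENNReal.ofReal (1 + ε) * Q F := by
  have hF_le_real : Q.real Fᶜ ≤ Q.real F := ENNReal.toReal_mono (measure_ne_top _ _) hF_le
  have h_compl_real : (1 - ε) * Q.real Fᶜ ≤ P.real Eᶜ := by
    have := ENNReal.toReal_mono (measure_ne_top _ _) h_compl
    rwa [ENNReal.toReal_mul, ENNReal.toReal_ofReal (by linarith [hε.2])] at this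
  rw [probReal_compl_eq_one_sub hE] at h_compl_real
  rw [probReal_compl_eq_one_sub hF] at hF_le_real h_compl_real
  rw [← ofReal_measureReal (μ := P), ← ofReal_measureReal (μ := Q),
    ← ENNReal.ofReal_mul (by linarith [hε.1])]
  refine ENNReal.ofReal_le_ofReal ?_
  linarith [mul_le_mul_of_nonneg_left hF_le_real hε.1]

theorem IsReward.dirichlet_setOf_le_le (h : IsReward p f b) (hA : 0 < A) (hf0 : f 0 = 0)
    {ε : ℝ} (hε : ε ∈ Ioo 0 1) {i₁ : Fin (m + 1)} (hf₁ : f i₁ = b)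
    (h₀ : 256 / ε ^ 2 ≤ A * p 0) (h₁ : 256 / ε ^ 2 ≤ A * p i₁) {μ : ℝ} (hμ : μ ∈ Ioo 0 b) :
    dirichlet m (Function.update (A • p) 0 ((A • p) 0 + 1)) {w | μ ≤ ∑ j, f j * w j} ≤
      ENNReal.ofReal (1 + ε) * gaussianReal 0 1 (Ici (√A * Afun p μ f)) := by
  rw [← h.image_tiltMean] at hμ
  obtain ⟨κ₀, hκ₀ : κ₀ < b⁻¹, rfl⟩ := hμ
  have ratio_bounds (κ : ℝ) (hκ : κ < b⁻¹) :=
    abs_sub_le_iff.1 (h.abs_saddleRatio_sub_one_le hA hκ hε hf0 hf₁ h₀ h₁)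
  rw [h.Afun_eq hκ₀, ← signedRoot]
  rcases le_or_gt 0 κ₀ with hκ₀' | hκ₀'
  · exact h.dirichlet_setOf_tiltMean_le_le hA hf0 hκ₀' hκ₀ fun κ hκ => by
      linarith [(ratio_bounds κ hκ.2).1]
  · have : IsProbabilityMeasure (dirichlet m (Function.update (A • p) 0 ((A • p) 0 + 1))) := by
      have smul_pos (j : Fin (m + 1)) : 0 < (A • p) j := mul_pos hA (h.pos j)
      exact isProbabilityMeasure_dirichlet <| (Function.forall_update_iff _ fun _ x => 0 < x).2
        ⟨by linarith [smul_pos 0], fun j _ => smul_pos j⟩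
    refine measureReal_le_one_add_mul_of_compl_le
      (measurableSet_le measurable_const (by fun_prop)) measurableSet_Ici ⟨hε.1.le, hε.2.le⟩ ?_ ?_
    · rw [compl_Ici]
      refine gaussianReal_Iio_le_Ici (mul_nonpos_of_nonneg_of_nonpos (sqrt_nonneg A) ?_)
      rw [signedRoot_of_nonpos h.sum_eq_one hκ₀'.le]
      exact neg_nonpos.2 (sqrt_nonneg _)
    · rw [compl_Ici, compl_ofPred]
      simp only [not_le]
      exact h.le_dirichlet_setOf_lt_tiltMean hA hf0 hκ₀' fun κ hκ => by
        linarith [(ratio_bounds κ (hκ.trans hκ₀)).2]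

end GaussianComparison

lemma two_hundred_fifty_six_le_c0 : 256 ≤ c0 := by
  have sqrt_six_ge : (2.4 : ℝ) ≤ √6 := Real.le_sqrt_of_sq_le (by norm_num)
  calc (256 : ℝ) ≤ 2 / 3.15 * 21 ^ 2 := by norm_num
    _ ≤ c0 := by
        unfold c0
        gcongr
        · exact pi_lt_d2.le
        · linarith

/-- **Upper bound on Dirichlet boundary-crossing probabilities, all thresholds**
(Corollary 1, upper bound). -/
theorem dirichlet_crossing_upper_all_thresholds
    (m : ℕ) (hm : 1 ≤ m) (b : ℝ) (hb : 0 < b)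
    (f : Fin (m + 1) → ℝ) (hf : ∀ i, f i ∈ Set.Icc (0 : ℝ) b)
    (hf0 : f 0 = 0) (hfm : f (Fin.last m) = b)
    (α : Fin (m + 1) → ℝ) (hα : ∀ i, 0 < α i)
    (ε : ℝ) (hε : ε ∈ Set.Ioo (0 : ℝ) 1)
    (hmin : c0 / ε ^ 2 ≤ min (α 0) (α (Fin.last m)))
    (μ : ℝ) (hμ : μ ∈ Set.Ioo (0 : ℝ) b) :
    dirichlet m (Function.update α 0 (α 0 + 1)) {w | μ ≤ ∑ ℓ, f ℓ * w ℓ}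
      ≤ ENNReal.ofReal (1 + ε) *
        gaussianReal 0 1
          {x | Real.sqrt (∑ j, α j) * Afun (fun ℓ => α ℓ / ∑ j, α j) μ f ≤ x} := by
  have hA : 0 < ∑ j, α j := Finset.sum_pos (fun i _ => hα i) Finset.univ_nonempty
  set A := ∑ j, α j with hA_def
  set p : Fin (m + 1) → ℝ := fun ℓ => α ℓ / A
  have mul_p (j : Fin (m + 1)) : A * p j = α j := mul_div_cancel₀ (α j) hA.ne'
  have reward : IsReward p f b :=
    { pos := fun j => div_pos (hα j) hA
      sum_eq_one := by rw [← Finset.sum_div, ← hA_def, div_self hA.ne']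
      bound_pos := hb
      mem_Icc := hf
      exists_eq_zero := ⟨0, hf0⟩
      exists_eq_bound := ⟨Fin.last m, hfm⟩ }
  have hmin' : 256 / ε ^ 2 ≤ min (α 0) (α (Fin.last m)) :=
    (div_le_div_of_nonneg_right two_hundred_fifty_six_le_c0 (sq_nonneg ε)).trans hmin
  have bound := reward.dirichlet_setOf_le_le hA hf0 hε hfm
    (by simpa only [mul_p] using hmin'.trans (min_le_left _ _))
    (by simpa only [mul_p] using hmin'.trans (min_le_right _ _)) hμ
  rwa [show A • p = α from funext mul_p] at bound

end
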